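/- arXiv:1202.5605 — 2 statements merged into one kernel-verified Lean document; each statement's English description precedes it below -/
import Mathlib

section
/- Let R be a commutative noetherian local ring and M a finitely generated R-module of finite projective dimension that is free when localized at every nonmaximal prime. Then res M = PD_0^n(R), where n = pd_R M. -/
universe u

open CategoryTheory

namespace ResolvPaper

variable (R : Type u) [CommRing R]

/-- `IsSES f g` means `0 → A → B → C → 0` is a short exact sequence. -/
def IsSES {R : Type u} [CommRing R] {A B C : Type u} [AddCommGroup A] [Module R A]
    [AddCommGroup B] [Module R B] [AddCommGroup C] [Module R C]
    (f : A →ₗ[R] B) (g : B →ₗ[R] C) : Prop :=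
  Function.Injective f ∧ Function.Surjective g ∧ LinearMap.range f = LinearMap.ker g

/-- A resolving subcategory of `mod R`, viewed as a set of bundled modules
closed under isomorphism, containing the finitely generated projective modules, and closed
under direct summands, extensions and syzygies. -/
structure IsResolving (𝒳 : Set (ModuleCat.{u} R)) : Prop where
  fg : ∀ M ∈ 𝒳, Module.Finite R M
  iso_closed : ∀ M N : ModuleCat.{u} R, Nonempty (M ≃ₗ[R] N) → M ∈ 𝒳 → N ∈ 𝒳
  proj_mem : ∀ M : ModuleCat.{u} R, Module.Finite R M → Module.Projective R M → M ∈ 𝒳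
  summand_closed : ∀ M N : ModuleCat.{u} R, ModuleCat.of R (↥M × ↥N) ∈ 𝒳 → M ∈ 𝒳
  ext_closed : ∀ (A B C : ModuleCat.{u} R) (f : A →ₗ[R] B) (g : B →ₗ[R] C),
    IsSES f g → A ∈ 𝒳 → C ∈ 𝒳 → B ∈ 𝒳
  syzygy_closed : ∀ (K P M : ModuleCat.{u} R) (f : K →ₗ[R] P) (g : P →ₗ[R] M),
    IsSES f g → Module.Finite R K → Module.Finite R P → Module.Projective R P →
    M ∈ 𝒳 → K ∈ 𝒳

/-- The resolving closure: the smallest resolving subcategory containing `S`. -/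
def resClosure (S : Set (ModuleCat.{u} R)) : Set (ModuleCat.{u} R) :=
  ⋂₀ {𝒳 | IsResolving R 𝒳 ∧ S ⊆ 𝒳}

/-- An extension-closed subcategory of `mod R`: closed under isomorphism,
direct summands and extensions. -/
def IsExtClosed (𝒳 : Set (ModuleCat.{u} R)) : Prop :=
  (∀ M N : ModuleCat.{u} R, Nonempty (M ≃ₗ[R] N) → M ∈ 𝒳 → N ∈ 𝒳) ∧
  (∀ M N : ModuleCat.{u} R, ModuleCat.of R (↥M × ↥N) ∈ 𝒳 → M ∈ 𝒳) ∧
  (∀ (A B C : ModuleCat.{u} R) (f : A →ₗ[R] B) (g : B →ₗ[R] C),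
    IsSES f g → A ∈ 𝒳 → C ∈ 𝒳 → B ∈ 𝒳)

/-- The extension closure of a set of modules. -/
def extClosure (S : Set (ModuleCat.{u} R)) : Set (ModuleCat.{u} R) :=
  ⋂₀ {𝒳 | IsExtClosed R 𝒳 ∧ S ⊆ 𝒳}

/-- `add R`: direct summands of finite free modules. -/
def addR : Set (ModuleCat.{u} R) :=
  {M | ∃ (n : ℕ) (N : ModuleCat.{u} R), Nonempty ((↥M × ↥N) ≃ₗ[R] (Fin n → R))}

/-- `pdLE n M` : the projective dimension of `M` is at most `n`. -/
def pdLE : ℕ → ModuleCat.{u} R → Prop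
  | 0, M => Module.Projective R M
  | n+1, M => ∃ (K P : ModuleCat.{u} R) (f : K →ₗ[R] P) (g : P →ₗ[R] M),
      Module.Finite R P ∧ Module.Projective R P ∧ IsSES f g ∧ pdLE n K

/-- The projective dimension, an element of `WithBot ℕ∞`; the zero module
has projective dimension `⊥ = -∞`. -/
noncomputable def pdim (M : ModuleCat.{u} R) : WithBot ℕ∞ :=
  sInf {x : WithBot ℕ∞ | (x = ⊥ ∧ Subsingleton M) ∨ ∃ n : ℕ, x = (n : ℕ∞) ∧ pdLE R n M}

/-- The depth of `M` with respect to the ideal `I`: the supremum of lengths of weakly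
`M`-regular sequences contained in `I`.  The zero module has depth `∞`. -/
noncomputable def depthE (I : Ideal R) (M : Type u) [AddCommGroup M] [Module R M] : ℕ∞ :=
  sSup {x : ℕ∞ | ∃ rs : List R, (∀ r ∈ rs, r ∈ I) ∧
    RingTheory.Sequence.IsWeaklyRegular M rs ∧ x = rs.length}

/-- The grade of an ideal: the length of a maximal `R`-regular sequence in `I`. -/
noncomputable def gradeE (I : Ideal R) : ℕ∞ := depthE R I R

/-- A grade consistent function on `Spec R`. -/
def GradeConsistent (f : PrimeSpectrum R → ℕ) : Prop :=
  (∀ p : PrimeSpectrum R, (f p : ℕ∞) ≤ gradeE R p.asIdeal) ∧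
  (∀ p q : PrimeSpectrum R, p.asIdeal ≤ q.asIdeal → f p ≤ f q)

/-- The localization of a module at a prime, as a module over the local ring `R_p`. -/
noncomputable abbrev localizeM (p : PrimeSpectrum R) (M : ModuleCat.{u} R) :
    ModuleCat.{u} (Localization.AtPrime p.asIdeal) :=
  ModuleCat.of (Localization.AtPrime p.asIdeal) (LocalizedModule p.asIdeal.primeCompl M)

/-- `pd_{R_p} M_p`. -/
noncomputable def localPdim (p : PrimeSpectrum R) (M : ModuleCat.{u} R) : WithBot ℕ∞ :=
  pdim (Localization.AtPrime p.asIdeal) (localizeM R p M)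

/-- `depth_{R_p} M_p`. -/
noncomputable def localDepth (p : PrimeSpectrum R) (M : ModuleCat.{u} R) : ℕ∞ :=
  depthE (Localization.AtPrime p.asIdeal)
    (IsLocalRing.maximalIdeal (Localization.AtPrime p.asIdeal))
    (LocalizedModule p.asIdeal.primeCompl M)

/-- The height of a prime ideal. -/
noncomputable def heightE (p : PrimeSpectrum R) : ℕ∞ := Order.height p

/-- `PD(R)` : finitely generated modules of finite projective dimension. -/
def PDcat : Set (ModuleCat.{u} R) :=
  {M | Module.Finite R M ∧ ∃ n : ℕ, pdLE R n M}

/-- `MCM(R)` : maximal Cohen-Macaulay modules. -/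
def MCMcat : Set (ModuleCat.{u} R) :=
  {M | Module.Finite R M ∧ ∀ p : PrimeSpectrum R, heightE R p ≤ localDepth R p M}

/-- The nonfree locus of a module. -/
def NF (M : ModuleCat.{u} R) : Set (PrimeSpectrum R) :=
  {p | ¬ Module.Free (Localization.AtPrime p.asIdeal) (LocalizedModule p.asIdeal.primeCompl M)}

/-- The infinite projective dimension locus of a module. -/
def IPD (M : ModuleCat.{u} R) : Set (PrimeSpectrum R) :=
  {p | localPdim R p M = (⊤ : WithBot ℕ∞)}

/-- The infinite projective dimension locus of a collection of modules. -/
def IPDcat (𝒳 : Set (ModuleCat.{u} R)) : Set (PrimeSpectrum R) :=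
  ⋃ M ∈ 𝒳, IPD R M

/-- The modules in `mod R` whose infinite projective dimension locus lies in `W`. -/
def IPDinv (W : Set (PrimeSpectrum R)) : Set (ModuleCat.{u} R) :=
  {M | Module.Finite R M ∧ IPD R M ⊆ W}

/-- A specialization closed subset of `Spec R`. -/
def SpecClosed (W : Set (PrimeSpectrum R)) : Prop :=
  ∀ p ∈ W, ∀ q : PrimeSpectrum R, p.asIdeal ≤ q.asIdeal → q ∈ W

/-- Membership in `add 𝒳_p`: direct summands of localizations of finite direct sums
of members of `𝒳`. -/
def memAddLocal (𝒳 : Set (ModuleCat.{u} R)) (p : PrimeSpectrum R)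
    (N : ModuleCat.{u} (Localization.AtPrime p.asIdeal)) : Prop :=
  ∃ (n : ℕ) (X : Fin n → ModuleCat.{u} R), (∀ i, X i ∈ 𝒳) ∧
    ∃ (N' : ModuleCat.{u} (Localization.AtPrime p.asIdeal)),
      Nonempty ((↥N × ↥N') ≃ₗ[Localization.AtPrime p.asIdeal]
        ((i : Fin n) → LocalizedModule p.asIdeal.primeCompl (X i)))

/-- `K` is an `n`-th syzygy of `M` computed from a minimal free resolution over the
local ring `S`. -/
def IsMinSyz (S : Type u) [CommRing S] [IsLocalRing S] :
    ℕ → ModuleCat.{u} S → ModuleCat.{u} S → Prop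
  | 0, M, K => Nonempty (K ≃ₗ[S] M)
  | n+1, M, K => ∃ (F : ModuleCat.{u} S) (g : F →ₗ[S] M) (K' : ModuleCat.{u} S)
      (i : K' →ₗ[S] F),
      Module.Finite S F ∧ Module.Free S F ∧ Function.Surjective g ∧
      (LinearMap.ker g ≤ (IsLocalRing.maximalIdeal S) • (⊤ : Submodule S F)) ∧
      Function.Injective i ∧ LinearMap.range i = LinearMap.ker g ∧
      IsMinSyz S n K' K

/-- `K` is an `n`-th syzygy of `M` in some projective resolution (over any ring). -/
def IsSyz : ℕ → ModuleCat.{u} R → ModuleCat.{u} R → Prop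
  | 0, M, K => Nonempty (K ≃ₗ[R] M)
  | n+1, M, K => ∃ (F : ModuleCat.{u} R) (g : F →ₗ[R] M) (K' : ModuleCat.{u} R)
      (i : K' →ₗ[R] F),
      Module.Finite R F ∧ Module.Projective R F ∧ Function.Surjective g ∧
      Function.Injective i ∧ LinearMap.range i = LinearMap.ker g ∧
      IsSyz n K' K

/-- `T` is (isomorphic to) the Auslander transpose of `M`, computed from a minimal
free presentation over the local ring `S`. -/
def IsTranspose (S : Type u) [CommRing S] [IsLocalRing S] (M T : ModuleCat.{u} S) : Prop :=
  ∃ (F1 F0 : ModuleCat.{u} S) (d : F1 →ₗ[S] F0) (e : F0 →ₗ[S] M),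
    Module.Finite S F0 ∧ Module.Free S F0 ∧ Module.Finite S F1 ∧ Module.Free S F1 ∧
    Function.Surjective e ∧ LinearMap.range d = LinearMap.ker e ∧
    LinearMap.ker e ≤ (IsLocalRing.maximalIdeal S) • (⊤ : Submodule S F0) ∧
    LinearMap.ker d ≤ (IsLocalRing.maximalIdeal S) • (⊤ : Submodule S F1) ∧
    Nonempty (T ≃ₗ[S] ((Module.Dual S F1) ⧸ LinearMap.range d.dualMap))

/-- `T` is (isomorphic to) `Tr Ω^n M` over the local ring `S`. -/
def IsTrOmega (S : Type u) [CommRing S] [IsLocalRing S] (n : ℕ) (M T : ModuleCat.{u} S) :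
    Prop :=
  ∃ K : ModuleCat.{u} S, IsMinSyz S n M K ∧ IsTranspose S K T

/-- Resolving subcategory `𝒳` is dominant on `W ⊆ Spec R`. -/
def DominantOn (𝒳 : Set (ModuleCat.{u} R)) (W : Set (PrimeSpectrum R)) : Prop :=
  ∀ p ∈ W, ∃ (n : ℕ) (K : ModuleCat.{u} (Localization.AtPrime p.asIdeal)),
    IsMinSyz (Localization.AtPrime p.asIdeal) n
      (ModuleCat.of (Localization.AtPrime p.asIdeal)
        (IsLocalRing.ResidueField (Localization.AtPrime p.asIdeal))) K ∧
    memAddLocal R 𝒳 p K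

/-- Dominant resolving subcategory. -/
def Dominant (𝒳 : Set (ModuleCat.{u} R)) : Prop := DominantOn R 𝒳 Set.univ

/-- A (noetherian) local ring is Cohen-Macaulay if its depth equals its Krull dimension. -/
def IsCMLocalRing (S : Type u) [CommRing S] [IsLocalRing S] : Prop :=
  IsNoetherianRing S ∧
    ((depthE S (IsLocalRing.maximalIdeal S) S : WithBot ℕ∞) = ringKrullDim S)

/-- A regular local ring: a noetherian local ring whose maximal ideal is generated by
`dim S` elements. -/
def IsRegLocalRing (S : Type u) [CommRing S] [IsLocalRing S] : Prop :=
  IsNoetherianRing S ∧ ∃ s : Finset S,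
    Ideal.span (s : Set S) = IsLocalRing.maximalIdeal S ∧
    ringKrullDim S = (s.card : WithBot ℕ∞)

/-- The singular locus of `R`. -/
def SingLocus : Set (PrimeSpectrum R) :=
  {p | ¬ IsRegLocalRing (Localization.AtPrime p.asIdeal)}

/-- A hypersurface local ring: the completion is a quotient of a regular local ring by
one element. -/
def IsHypersurfaceLocalRing (S : Type u) [CommRing S] [IsLocalRing S] : Prop :=
  ∃ (T : Type u) (_ : CommRing T) (_ : IsLocalRing T) (f : T),
    IsRegLocalRing T ∧
    Nonempty ((AdicCompletion (IsLocalRing.maximalIdeal S) S) ≃+* (T ⧸ Ideal.span {f}))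

/-- A complete intersection local ring: the completion is a quotient of a regular local
ring by a regular sequence. -/
def IsCompleteIntersectionLocalRing (S : Type u) [CommRing S] [IsLocalRing S] : Prop :=
  ∃ (T : Type u) (_ : CommRing T) (_ : IsLocalRing T) (rs : List T),
    IsRegLocalRing T ∧ RingTheory.Sequence.IsRegular T rs ∧
    Nonempty ((AdicCompletion (IsLocalRing.maximalIdeal S) S) ≃+*
      (T ⧸ Ideal.ofList rs))

/-- The subquotient `A / (A ⊓ B)` of two submodules, used for homology. -/
def subquot {S M : Type u} [CommRing S] [AddCommGroup M] [Module S M]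
    (A B : Submodule S M) : Type u :=
  A ⧸ (B.comap A.subtype)

noncomputable instance {S M : Type u} [CommRing S] [AddCommGroup M] [Module S M]
    (A B : Submodule S M) : AddCommGroup (subquot A B) :=
  inferInstanceAs (AddCommGroup (A ⧸ (B.comap A.subtype)))

noncomputable instance {S M : Type u} [CommRing S] [AddCommGroup M] [Module S M]
    (A B : Submodule S M) : Module S (subquot A B) :=
  inferInstanceAs (Module S (A ⧸ (B.comap A.subtype)))

/-- `E` is (isomorphic to) `Ext^{j+1}_S(M, S)`, computed from a finite free resolution. -/
def IsExtPos (S : Type u) [CommRing S] (j : ℕ) (M E : ModuleCat.{u} S) : Prop :=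
  ∃ (F : ℕ → ModuleCat.{u} S) (d : ∀ i : ℕ, (F (i+1) : Type u) →ₗ[S] F i)
    (e : (F 0 : Type u) →ₗ[S] M),
    (∀ i, Module.Finite S (F i)) ∧ (∀ i, Module.Free S (F i)) ∧
    Function.Surjective e ∧ LinearMap.range (d 0) = LinearMap.ker e ∧
    (∀ i, LinearMap.range (d (i+1)) = LinearMap.ker (d i)) ∧
    Nonempty (E ≃ₗ[S]
      subquot (LinearMap.ker ((d (j+1)).dualMap)) (LinearMap.range ((d j).dualMap)))

/-- `T` is (isomorphic to) `Tor_n^S(M, N)`, computed from a projective resolution of `M`. -/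
def IsTor (S : Type u) [CommRing S] (n : ℕ) (M N T : ModuleCat.{u} S) : Prop :=
  ∃ (F : ℕ → ModuleCat.{u} S) (d : ∀ i : ℕ, (F (i+1) : Type u) →ₗ[S] F i)
    (e : (F 0 : Type u) →ₗ[S] M),
    (∀ i, Module.Projective S (F i)) ∧
    Function.Surjective e ∧ LinearMap.range (d 0) = LinearMap.ker e ∧
    (∀ i, LinearMap.range (d (i+1)) = LinearMap.ker (d i)) ∧
    (match n with
      | 0 => Nonempty (T ≃ₗ[S] TensorProduct S M N)
      | (j+1) => Nonempty (T ≃ₗ[S]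
          subquot (LinearMap.ker (LinearMap.rTensor (↥N) (d j)))
            (LinearMap.range (LinearMap.rTensor (↥N) (d (j+1))))))

/-- `idLE n M` : the injective dimension of `M` is at most `n`. -/
def idLE (S : Type u) [CommRing S] : ℕ → ModuleCat.{u} S → Prop
  | 0, M => Module.Injective S M
  | n+1, M => ∃ (I C : ModuleCat.{u} S) (f : M →ₗ[S] I) (g : I →ₗ[S] C),
      IsSES f g ∧ Module.Injective S I ∧ idLE S n C

/-- `PD_0^n(R)` over a local ring: modules of projective dimension at most `n` that are
free on the punctured spectrum. -/
def PD0n [IsLocalRing R] (n : ℕ) : Set (ModuleCat.{u} R) :=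
  {M | Module.Finite R M ∧ pdLE R n M ∧
    ∀ p : PrimeSpectrum R, p.asIdeal ≠ IsLocalRing.maximalIdeal R →
      Module.Free (Localization.AtPrime p.asIdeal) (LocalizedModule p.asIdeal.primeCompl M)}

/-- `PD_0(R)` over a local ring: modules of finite projective dimension that are
free on the punctured spectrum. -/
def PD0 [IsLocalRing R] : Set (ModuleCat.{u} R) :=
  {M | Module.Finite R M ∧ (∃ n : ℕ, pdLE R n M) ∧
    ∀ p : PrimeSpectrum R, p.asIdeal ≠ IsLocalRing.maximalIdeal R →
      Module.Free (Localization.AtPrime p.asIdeal) (LocalizedModule p.asIdeal.primeCompl M)}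

/-- The residue field of a local ring, as a bundled module. -/
noncomputable abbrev residueMod (S : Type u) [CommRing S] [IsLocalRing S] : ModuleCat.{u} S :=
  ModuleCat.of S (IsLocalRing.ResidueField S)

/-! Multiplying a cover `F → Z` by `x : Z → Z`, that is, passing to the pullback `W` of the two
maps, does not change membership in resolving subcategories as long as `Z` is projective away
from `x`: both `W` and `Z` are recovered from one another by extensions, syzygies and summands.
If the `m`-th syzygy of `Z` has presentation matrix `d`, that of `W` has presentation matrix
`(x, d)ᵗ`. Running through generators `x₁, …, xᵣ` of the maximal ideal, and taking `d` minimal so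
that its entries are combinations of the `xᵢ`, one replaces `Z` by a module whose `m`-th syzygy is
`Jᵃ ⊕ Rᵇ` with `J = coker (R → Rʳ)`, whatever `Z` was (the transpose of the residue field).

Left approximations by free modules lift `J` back up through `m` syzygies to a module `S` which,
up to modules of smaller projective dimension, generates and is generated by every module of
projective dimension exactly `m + 1` in `PD₀`. These approximations are injective since a module
of projective dimension smaller than `pd M` has no socle: `Torₙ(M, k) ≠ 0` for `n = pd M`. -/

section ShortExact

variable {R : Type u} [CommRing R] {A B C D : Type u} [AddCommGroup A] [Module R A]
  [AddCommGroup B] [Module R B] [AddCommGroup C] [Module R C] [AddCommGroup D] [Module R D]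
  {f : A →ₗ[R] B} {g : B →ₗ[R] C}

namespace IsSES

lemma of_exact (hf : Function.Injective f) (hg : Function.Surjective g)
    (hfg : Function.Exact f g) : IsSES f g :=
  ⟨hf, hg, (LinearMap.exact_iff.1 hfg).symm⟩

lemma of_forall (hf : ∀ a, f a = 0 → a = 0) (hg : Function.Surjective g)
    (hfg : ∀ a, g (f a) = 0) (hker : ∀ b, g b = 0 → ∃ a, f a = b) : IsSES f g :=
  .of_exact ((injective_iff_map_eq_zero f).2 hf) hg fun b =>
    ⟨hker b, by rintro ⟨a, rfl⟩; exact hfg a⟩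

lemma of_surjective (hg : Function.Surjective g) : IsSES (LinearMap.ker g).subtype g :=
  .of_exact Subtype.val_injective hg (LinearMap.exact_subtype_ker_map g)

lemma of_injective (hf : Function.Injective f) : IsSES f (LinearMap.range f).mkQ :=
  .of_exact hf (Submodule.mkQ_surjective _) (LinearMap.exact_map_mkQ_range f)

lemma inl_snd : IsSES (LinearMap.inl R A B) (LinearMap.snd R A B) :=
  .of_exact LinearMap.inl_injective LinearMap.snd_surjective .inl_snd

variable (h : IsSES f g)
include h

lemma exact : Function.Exact f g := LinearMap.exact_iff.2 h.2.2.symm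

lemma apply_apply_eq_zero (a : A) : g (f a) = 0 := h.exact.apply_apply_eq_zero a

lemma exists_apply_eq {b : B} (hb : g b = 0) : ∃ a, f a = b := (h.exact b).1 hb

lemma exists_lift (t : D →ₗ[R] B) (ht : ∀ d, g (t d) = 0) :
    ∃ t' : D →ₗ[R] A, ∀ d, f (t' d) = t d :=
  ⟨t.codRestrictOfInjective f h.1 fun d => h.exists_apply_eq (ht d),
    LinearMap.codRestrictOfInjective_comp_apply _ _ _ _⟩

lemma exists_desc (t : B →ₗ[R] D) (ht : ∀ a, t (f a) = 0) :
    ∃ t' : C →ₗ[R] D, ∀ b, t' (g b) = t b := by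
  obtain ⟨t', ht'⟩ :=
    (LinearMap.exact_lcomp_of_exact_of_surjective D h.exact h.2.1 t).1 (LinearMap.ext ht)
  exact ⟨t', LinearMap.congr_fun ht'⟩

variable {B' C' : Type u} [AddCommGroup B'] [Module R B'] [AddCommGroup C'] [Module R C']

lemma comp_equiv (e : D ≃ₗ[R] A) : IsSES (f ∘ₗ e.toLinearMap) g :=
  ⟨h.1.comp e.injective, h.2.1, by rw [LinearMap.range_comp_of_range_eq_top f e.range, h.2.2]⟩

lemma equiv_comp (e : C ≃ₗ[R] C') : IsSES f (e.toLinearMap ∘ₗ g) :=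
  ⟨h.1, e.surjective.comp h.2.1, by rw [LinearEquiv.ker_comp, h.2.2]⟩

lemma conj_equiv (e : B ≃ₗ[R] B') : IsSES (e.toLinearMap ∘ₗ f) (g ∘ₗ e.symm.toLinearMap) :=
  .of_exact (e.injective.comp h.1) (h.2.1.comp e.symm.surjective)
    ((LinearEquiv.conj_exact_iff_exact f g e).2 h.exact)

lemma nonempty_equiv_right {g' : B →ₗ[R] C'} (h' : IsSES f g') : Nonempty (C ≃ₗ[R] C') :=
  ⟨(h.exact.linearEquivOfSurjective h.2.1).symm.trans (h'.exact.linearEquivOfSurjective h'.2.1)⟩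

end IsSES

end ShortExact

section LeftApproximation

variable {R : Type u} [CommRing R] {A B C D : Type u} [AddCommGroup A] [Module R A]
  [AddCommGroup B] [Module R B] [AddCommGroup C] [Module R C] [AddCommGroup D] [Module R D]
  {φ : A →ₗ[R] B} {ψ : C →ₗ[R] D}

-- `Surjective φ.dualMap` is the condition that `φ` be a left `add R`-approximation of `A`.
lemma exists_surjective_dualMap_fin (A : Type u) [AddCommGroup A] [Module R A]
    [Module.Finite R (Module.Dual R A)] :
    ∃ (k : ℕ) (φ : A →ₗ[R] (Fin k → R)), Function.Surjective φ.dualMap := by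
  obtain ⟨k, p, hp⟩ := Module.Finite.exists_fin' R (Module.Dual R A)
  refine ⟨k, LinearMap.pi fun i => p (Pi.single i 1), fun f => ?_⟩
  obtain ⟨c, rfl⟩ := hp f
  refine ⟨∑ i, c i • LinearMap.proj i, LinearMap.ext fun a => ?_⟩
  conv_rhs => rw [pi_eq_sum_univ' c]
  simp [LinearMap.sum_apply]

lemma exists_extend_of_surjective_dualMap (hφ : Function.Surjective φ.dualMap)
    [Module.Finite R C] [Module.Projective R C] (f : A →ₗ[R] C) :
    ∃ e : B →ₗ[R] C, ∀ a, e (φ a) = f a := by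
  obtain ⟨k, p, i, -, -, hpi⟩ := Module.Finite.exists_comp_eq_id_of_projective R C
  choose e he using fun j => hφ (LinearMap.proj j ∘ₗ i ∘ₗ f)
  refine ⟨p ∘ₗ LinearMap.pi e, fun a => ?_⟩
  have hcoord : LinearMap.pi e (φ a) = i (f a) := funext fun j => LinearMap.congr_fun (he j) a
  rw [LinearMap.comp_apply, hcoord]
  exact LinearMap.congr_fun hpi (f a)

lemma surjective_dualMap_prodMap (hφ : Function.Surjective φ.dualMap)
    (hψ : Function.Surjective ψ.dualMap) : Function.Surjective (φ.prodMap ψ).dualMap := by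
  intro f
  obtain ⟨d, hd⟩ := hφ (f ∘ₗ LinearMap.inl R A C)
  obtain ⟨e, he⟩ := hψ (f ∘ₗ LinearMap.inr R A C)
  refine ⟨d.coprod e, LinearMap.prod_ext ?_ ?_⟩
  · rw [← hd]; ext; simp
  · rw [← he]; ext; simp

lemma surjective_dualMap_compLeft (hφ : Function.Surjective φ.dualMap) (ι : Type*) [Finite ι] :
    Function.Surjective (φ.compLeft ι).dualMap := by
  classical
  have := Fintype.ofFinite ι
  intro f
  choose e he using fun j => hφ (f ∘ₗ LinearMap.single R (fun _ => A) j)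
  refine ⟨∑ j, e j ∘ₗ LinearMap.proj j, LinearMap.pi_ext' fun j => LinearMap.ext fun a => ?_⟩
  rw [← he j]
  simp [Pi.single_apply, apply_ite]

end LeftApproximation

section ProjectiveAway

/-- Elementary form of "the finitely presented module `N[1/x]` is projective over `R[1/x]`":
some power of `x` acts on `N` through a finite free module. -/
def IsProjectiveAway {R : Type u} [CommRing R] (x : R) (N : Type u) [AddCommGroup N]
    [Module R N] : Prop :=
  ∃ (e k : ℕ) (f : N →ₗ[R] (Fin k → R)) (g : (Fin k → R) →ₗ[R] N), ∀ z, g (f z) = x ^ e • z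

variable {R : Type u} [CommRing R] {A B C : Type u} [AddCommGroup A] [Module R A]
  [AddCommGroup B] [Module R B] [AddCommGroup C] [Module R C] {x : R}
  {f : A →ₗ[R] B} {g : B →ₗ[R] C}

namespace IsProjectiveAway

lemma of_factor_projective {P : Type u} [AddCommGroup P] [Module R P] [Module.Finite R P]
    [Module.Projective R P] {e : ℕ} (f : A →ₗ[R] P) (g : P →ₗ[R] A)
    (hgf : ∀ z, g (f z) = x ^ e • z) : IsProjectiveAway x A := by
  obtain ⟨k, p, i, -, -, hpi⟩ := Module.Finite.exists_comp_eq_id_of_projective R P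
  exact ⟨e, k, i ∘ₗ f, g ∘ₗ p, fun z => by
    simpa [hgf] using congrArg g (LinearMap.congr_fun hpi (f z))⟩

lemma of_projective [Module.Finite R A] [Module.Projective R A] : IsProjectiveAway x A :=
  of_factor_projective (e := 0) LinearMap.id LinearMap.id (by simp)

lemma retract (hB : IsProjectiveAway x B) (i : A →ₗ[R] B) (p : B →ₗ[R] A)
    (hpi : ∀ a, p (i a) = a) : IsProjectiveAway x A := by
  obtain ⟨e, k, f, g, hgf⟩ := hB
  exact ⟨e, k, f ∘ₗ i, p ∘ₗ g, fun z => by simp [hgf, hpi]⟩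

lemma exists_section (hC : IsProjectiveAway x C) (hg : Function.Surjective g) :
    ∃ (e : ℕ) (s : C →ₗ[R] B), ∀ c, g (s c) = x ^ e • c := by
  obtain ⟨e, k, p, q, hqp⟩ := hC
  obtain ⟨s, hs⟩ := Module.projective_lifting_property g q hg
  exact ⟨e, s ∘ₗ p, fun c => (LinearMap.congr_fun hs (p c)).trans (hqp c)⟩

lemma exists_extend (hA : IsProjectiveAway x A) (hf : Function.Surjective f.dualMap) :
    ∃ (e : ℕ) (ρ : B →ₗ[R] A), ∀ a, ρ (f a) = x ^ e • a := by
  obtain ⟨e, k, p, q, hqp⟩ := hA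
  obtain ⟨t, ht⟩ := exists_extend_of_surjective_dualMap hf p
  exact ⟨e, q ∘ₗ t, fun a => by simp [ht, hqp]⟩

lemma middle (h : IsSES f g) (hA : IsProjectiveAway x A) (hC : IsProjectiveAway x C) :
    IsProjectiveAway x B := by
  obtain ⟨e, k, p, q, hqp⟩ := hC
  obtain ⟨s, hs⟩ := Module.projective_lifting_property g q h.2.1
  replace hs : ∀ y, g (s y) = q y := LinearMap.congr_fun hs
  obtain ⟨t, ht⟩ := h.exists_lift (x ^ e • LinearMap.id - s ∘ₗ p ∘ₗ g) fun b => by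
    simp [hs, hqp]
  obtain ⟨e', k', p', q', hqp'⟩ := hA
  refine of_factor_projective (e := e' + e) (((x ^ e') • p ∘ₗ g).prod (p' ∘ₗ t))
    (s.coprod (f ∘ₗ q')) fun z => ?_
  simp [hqp', ht, pow_add, mul_smul, smul_sub]

lemma exists_retraction (h : IsSES f g) (hC : IsProjectiveAway x C) :
    ∃ (e : ℕ) (t : B →ₗ[R] A), ∀ a, t (f a) = x ^ e • a := by
  obtain ⟨e, s, hs⟩ := hC.exists_section h.2.1
  obtain ⟨t, ht⟩ := h.exists_lift (x ^ e • LinearMap.id - s ∘ₗ g) fun b => by simp [hs]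
  exact ⟨e, t, fun a => h.1 (by simp [ht, h.apply_apply_eq_zero])⟩

lemma left (h : IsSES f g) (hB : IsProjectiveAway x B) (hC : IsProjectiveAway x C) :
    IsProjectiveAway x A := by
  obtain ⟨e, t, ht⟩ := exists_retraction h hC
  obtain ⟨e', k', p, q, hqp⟩ := hB
  exact ⟨e' + e, k', p ∘ₗ f, t ∘ₗ q, fun z => by simp [hqp, ht, pow_add, mul_smul]⟩

lemma right_of_retraction (h : IsSES f g) [Module.Finite R B] [Module.Projective R B] {e : ℕ}
    (ρ : B →ₗ[R] A) (hρ : ∀ a, ρ (f a) = x ^ e • a) : IsProjectiveAway x C := by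
  obtain ⟨t, ht⟩ := h.exists_desc (x ^ e • LinearMap.id - f ∘ₗ ρ) fun a => by simp [hρ]
  refine of_factor_projective (e := e) t g fun z => ?_
  obtain ⟨b, rfl⟩ := h.2.1 z
  simp [ht, h.apply_apply_eq_zero]

end IsProjectiveAway

end ProjectiveAway

section PuncturedSpectrum

variable {R : Type u} [CommRing R] {N : Type u} [AddCommGroup N] [Module R N]

lemma isProjectiveAway_of_projective_localization [Module.FinitePresentation R N] (x : R)
    [Module.Projective (Localization (Submonoid.powers x))
      (LocalizedModule (Submonoid.powers x) N)] : IsProjectiveAway x N := by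
  obtain ⟨k, π, hπ⟩ := Module.Finite.exists_fin' R N
  obtain ⟨σ, hσ⟩ := Module.projective_lifting_property
    (LocalizedModule.map (Submonoid.powers x) π) LinearMap.id
    (LocalizedModule.map_surjective _ π hπ)
  obtain ⟨⟨t, _, e, rfl⟩, ht⟩ := IsLocalizedModule.surj (Submonoid.powers x)
    (LocalizedModule.map (Submonoid.powers x) (M := N) (N := Fin k → R)) σ
  have hloc : LocalizedModule.map (Submonoid.powers x) (π ∘ₗ t) =
      LocalizedModule.map (Submonoid.powers x) (x ^ e • LinearMap.id) := by
    calc LocalizedModule.map (Submonoid.powers x) (π ∘ₗ t)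
        = LocalizedModule.map (Submonoid.powers x) π ∘ₗ
            LocalizedModule.map (Submonoid.powers x) t := LinearMap.ext fun z => by
          induction z using LocalizedModule.induction_on with | h z s => simp
      _ = x ^ e • (LocalizedModule.map (Submonoid.powers x) π ∘ₗ σ) := by
          rw [← ht, Submonoid.smul_def, LinearMap.comp_smul]
      _ = LocalizedModule.map (Submonoid.powers x) (x ^ e • LinearMap.id) := by
          rw [hσ, map_smul, LocalizedModule.map_id]
  obtain ⟨⟨_, e', rfl⟩, he'⟩ := IsLocalizedModule.exists_of_eq (S := Submonoid.powers x) hloc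
  refine ⟨e' + e, k, t, x ^ e' • π, fun z => ?_⟩
  simpa [Submonoid.smul_def, pow_add, mul_smul] using LinearMap.congr_fun he' z

lemma IsProjectiveAway.projective_localization {x : R} (h : IsProjectiveAway x N)
    (S : Submonoid R) (hx : x ∈ S) :
    Module.Projective (Localization S) (LocalizedModule S N) := by
  obtain ⟨e, k, f, g, hgf⟩ := h
  have : Module.Projective (Localization S) (LocalizedModule S (Fin k → R)) :=
    Module.projective_of_isLocalizedModule S (LocalizedModule.mkLinearMap S (Fin k → R))
  refine Module.Projective.of_split (LocalizedModule.map S f)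
    ((Localization.mk 1 (⟨x, hx⟩ ^ e) : Localization S) • LocalizedModule.map S g) ?_
  ext z
  induction z using LocalizedModule.induction_on with
  | h z s =>
    simp only [LinearMap.comp_apply, LinearMap.smul_apply, LocalizedModule.map_mk, hgf,
      LinearMap.id_apply, LocalizedModule.mk_smul_mk, one_smul, LocalizedModule.mk_eq]
    exact ⟨1, by simp [Submonoid.smul_def, mul_smul, smul_comm s.1 (x ^ e)]⟩

variable [IsLocalRing R]

theorem forall_free_localization_iff_forall_isProjectiveAway [Module.FinitePresentation R N] :
    (∀ p : PrimeSpectrum R, p.asIdeal ≠ IsLocalRing.maximalIdeal R →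
      Module.Free (Localization.AtPrime p.asIdeal) (LocalizedModule p.asIdeal.primeCompl N)) ↔
    ∀ x ∈ IsLocalRing.maximalIdeal R, IsProjectiveAway x N := by
  constructor
  · intro h x hx
    have hsub : (PrimeSpectrum.basicOpen x : Set (PrimeSpectrum R)) ⊆ Module.freeLocus R N :=
      fun p hp => h p fun hpm => hp (hpm ▸ hx)
    have := Module.basicOpen_subset_freeLocus_iff.1 hsub
    exact isProjectiveAway_of_projective_localization x
  · intro h p hp
    obtain ⟨x, hx, hxp⟩ : ∃ x ∈ IsLocalRing.maximalIdeal R, x ∉ p.asIdeal := by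
      by_contra! hle
      exact hp (le_antisymm (IsLocalRing.le_maximalIdeal p.2.ne_top) hle)
    have := (h x hx).projective_localization p.asIdeal.primeCompl hxp
    exact Module.free_of_flat_of_isLocalRing

end PuncturedSpectrum

section Socle

variable {R : Type u} [CommRing R] {I : Ideal R} {A B C : Type u} [AddCommGroup A] [Module R A]
  [AddCommGroup B] [Module R B] [AddCommGroup C] [Module R C]

lemma eq_zero_of_torsionBySet_eq_bot (hA : Submodule.torsionBySet R A I = ⊥) {z : A}
    (hz : ∀ x ∈ I, x • z = 0) : z = 0 := by
  rw [← Submodule.mem_bot R, ← hA]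
  exact (Submodule.mem_torsionBySet_iff _ _).2 fun x => hz x x.2

lemma eq_zero_of_forall_mem_pow_smul_eq_zero (hA : Submodule.torsionBySet R A I = ⊥) (n : ℕ)
    {z : A} (hz : ∀ r ∈ I ^ n, r • z = 0) : z = 0 := by
  induction n generalizing z with
  | zero => simpa using hz 1 (by simp)
  | succ n ih =>
    refine ih fun r hr => eq_zero_of_torsionBySet_eq_bot hA fun x hx => ?_
    rw [smul_smul]
    exact hz _ (pow_succ' I n ▸ Ideal.mul_mem_mul hx hr)

lemma eq_zero_of_forall_exists_pow_smul_eq_zero (hI : I.FG)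
    (hA : Submodule.torsionBySet R A I = ⊥) {z : A} (hz : ∀ x ∈ I, ∃ e : ℕ, x ^ e • z = 0) :
    z = 0 := by
  have hle : I ≤ Ideal.radical (LinearMap.ker (LinearMap.toSpanSingleton R A z)) := fun x hx => by
    obtain ⟨e, he⟩ := hz x hx
    exact ⟨e, by simpa using he⟩
  obtain ⟨n, hn⟩ := Ideal.exists_pow_le_of_le_radical_of_fg hle hI
  exact eq_zero_of_forall_mem_pow_smul_eq_zero hA n fun r hr => by simpa using hn hr

lemma injective_comp_of_surjective_dualMap (hI : I.FG)
    (hA : Submodule.torsionBySet R A I = ⊥) (hB : ∀ x ∈ I, IsProjectiveAway x B)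
    {f : A →ₗ[R] B} (hf : Function.Injective f) {φ : B →ₗ[R] C}
    (hφ : Function.Surjective φ.dualMap) : Function.Injective (φ ∘ₗ f) := by
  refine (injective_iff_map_eq_zero _).2 fun a ha => ?_
  refine eq_zero_of_forall_exists_pow_smul_eq_zero hI hA fun x hx => ?_
  obtain ⟨e, ρ, hρ⟩ := (hB x hx).exists_extend hφ
  refine ⟨e, hf ?_⟩
  rw [map_smul, ← hρ, map_zero, ← map_zero ρ]
  exact congrArg ρ ha

end Socle

section ProjectiveDimension

variable {R : Type u} [CommRing R] {A B C : Type u} [AddCommGroup A] [Module R A]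
  [AddCommGroup B] [Module R B] [AddCommGroup C] [Module R C]
  {f : A →ₗ[R] B} {g : B →ₗ[R] C}

lemma IsSES.shortExact (h : IsSES f g) :
    (ModuleCat.shortComplexOfCompEqZero f g h.exact.linearMap_comp_eq_zero).ShortExact :=
  ModuleCat.shortComplex_shortExact _ h.exact h.1 h.2.1

lemma moduleProjective_iff_hasProjectiveDimensionLT_one :
    Module.Projective R A ↔ HasProjectiveDimensionLT (ModuleCat.of R A) 1 := by
  rw [← projective_iff_hasProjectiveDimensionLT_one, IsProjective.iff_projective]

lemma hasProjectiveDimensionLT_succ_of_projective [Module.Projective R A] (n : ℕ) :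
    HasProjectiveDimensionLT (ModuleCat.of R A) (n + 1) :=
  have := (moduleProjective_iff_hasProjectiveDimensionLT_one (R := R) (A := A)).1 inferInstance
  hasProjectiveDimensionLT_of_ge _ 1 _ (by omega)

lemma hasProjectiveDimensionLT_zero_iff_subsingleton :
    HasProjectiveDimensionLT (ModuleCat.of R A) 0 ↔ Subsingleton A := by
  rw [hasProjectiveDimensionLT_zero_iff_isZero, ModuleCat.isZero_iff_subsingleton]

lemma IsSES.hasProjectiveDimensionLT_left_iff (h : IsSES f g) [Module.Projective R B] (n : ℕ) :
    HasProjectiveDimensionLT (ModuleCat.of R A) (n + 1) ↔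
      HasProjectiveDimensionLT (ModuleCat.of R C) (n + 2) :=
  (h.shortExact.hasProjectiveDimensionLT_X₃_iff n
    ((IsProjective.iff_projective _).1 inferInstance)).symm

lemma IsSES.hasProjectiveDimensionLT_right (h : IsSES f g) [Module.Projective R B] {n : ℕ}
    (hA : HasProjectiveDimensionLT (ModuleCat.of R A) n) :
    HasProjectiveDimensionLT (ModuleCat.of R C) (n + 1) :=
  h.shortExact.hasProjectiveDimensionLT_X₃ n hA (hasProjectiveDimensionLT_succ_of_projective n)

theorem pdLE_iff_hasProjectiveDimensionLE [IsNoetherianRing R] {n : ℕ} {N : ModuleCat.{u} R}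
    [Module.Finite R N] : pdLE R n N ↔ HasProjectiveDimensionLE N n := by
  induction n generalizing N with
  | zero => exact moduleProjective_iff_hasProjectiveDimensionLT_one
  | succ n ih =>
    constructor
    · rintro ⟨K, P, f, g, _, _, h, hK⟩
      have : Module.Finite R K := Module.Finite.of_injective f h.1
      exact (h.hasProjectiveDimensionLT_left_iff n).1 (ih.1 hK)
    · intro hN
      obtain ⟨k, π, hπ⟩ := Module.Finite.exists_fin' R N
      have hses := IsSES.of_surjective hπ
      exact ⟨.of R (LinearMap.ker π), .of R (Fin k → R), _, π, inferInstanceAs (Module.Finite R _),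
        inferInstanceAs (Module.Projective R (Fin k → R)), hses,
        (ih (N := .of R (LinearMap.ker π))).2 ((hses.hasProjectiveDimensionLT_left_iff n).2 hN)⟩

lemma pdLE_of_pdim_eq {n : ℕ} {M : ModuleCat.{u} R} (h : pdim R M = ((n : ℕ∞) : WithBot ℕ∞)) :
    pdLE R n M := by
  have hne : {x : WithBot ℕ∞ | (x = ⊥ ∧ Subsingleton M) ∨
      ∃ n : ℕ, x = (n : ℕ∞) ∧ pdLE R n M}.Nonempty := by
    by_contra hempty
    rw [pdim, Set.not_nonempty_iff_eq_empty.1 hempty, sInf_empty] at h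
    exact absurd (WithBot.coe_injective h) (by simp)
  obtain ⟨hbot, -⟩ | ⟨k, hk, hMk⟩ := csInf_mem hne
  · exact absurd (h.symm.trans hbot) WithBot.coe_ne_bot
  · have hnk : n = k := by exact_mod_cast h.symm.trans hk
    exact hnk ▸ hMk

lemma le_of_pdim_eq {n : ℕ} {M : ModuleCat.{u} R} (h : pdim R M = ((n : ℕ∞) : WithBot ℕ∞)) {k : ℕ}
    (hk : pdLE R k M) : n ≤ k := by
  have hle : pdim R M ≤ ((k : ℕ∞) : WithBot ℕ∞) := sInf_le (.inr ⟨k, rfl, hk⟩)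
  exact_mod_cast h ▸ hle

end ProjectiveDimension

namespace IsResolving

variable {R : Type u} [CommRing R] {𝒳 : Set (ModuleCat.{u} R)} {A B C : Type u} [AddCommGroup A]
  [Module R A] [AddCommGroup B] [Module R B] [AddCommGroup C] [Module R C]
  {f : A →ₗ[R] B} {g : B →ₗ[R] C}

lemma mem_of_equiv (hX : IsResolving R 𝒳) (e : A ≃ₗ[R] B) (hA : ModuleCat.of R A ∈ 𝒳) :
    ModuleCat.of R B ∈ 𝒳 :=
  hX.iso_closed _ _ ⟨e⟩ hA

lemma mem_of_isSES (hX : IsResolving R 𝒳) (h : IsSES f g) (hA : ModuleCat.of R A ∈ 𝒳)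
    (hC : ModuleCat.of R C ∈ 𝒳) : ModuleCat.of R B ∈ 𝒳 :=
  hX.ext_closed (.of R A) (.of R B) (.of R C) f g h hA hC

lemma mem_of_projective (hX : IsResolving R 𝒳) [Module.Finite R A] [Module.Projective R A] :
    ModuleCat.of R A ∈ 𝒳 :=
  hX.proj_mem (.of R A) ‹_› ‹_›

lemma mem_syzygy [IsNoetherianRing R] (hX : IsResolving R 𝒳) (h : IsSES f g) [Module.Finite R B]
    [Module.Projective R B] (hC : ModuleCat.of R C ∈ 𝒳) : ModuleCat.of R A ∈ 𝒳 :=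
  hX.syzygy_closed (.of R A) (.of R B) (.of R C) f g h (Module.Finite.of_injective f h.1) ‹_› ‹_› hC

lemma mem_fst (hX : IsResolving R 𝒳) (h : ModuleCat.of R (A × B) ∈ 𝒳) : ModuleCat.of R A ∈ 𝒳 :=
  hX.summand_closed (.of R A) (.of R B) h

lemma mem_prod (hX : IsResolving R 𝒳) (hA : ModuleCat.of R A ∈ 𝒳) (hB : ModuleCat.of R B ∈ 𝒳) :
    ModuleCat.of R (A × B) ∈ 𝒳 :=
  hX.mem_of_isSES .inl_snd hA hB

lemma mem_pi (hX : IsResolving R 𝒳) (hA : ModuleCat.of R A ∈ 𝒳) (k : ℕ) :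
    ModuleCat.of R (Fin k → A) ∈ 𝒳 := by
  induction k with
  | zero => exact hX.mem_of_projective
  | succ k ih =>
    exact hX.mem_of_equiv (Fin.consLinearEquiv R fun _ : Fin (k + 1) => A) (hX.mem_prod hA ih)

end IsResolving

section MulPullback

variable {R : Type u} [CommRing R] {F Z A K P : Type u} [AddCommGroup F] [Module R F]
  [AddCommGroup Z] [Module R Z] [AddCommGroup A] [Module R A] [AddCommGroup K] [Module R K]
  [AddCommGroup P] [Module R P]

/-- The pullback of `π : F → Z` along multiplication by `x` on `Z`. When `π` is a finite projective
cover of `Z`, it is an extension of `Z` by a first syzygy of `Z`. -/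
abbrev mulPullback (π : F →ₗ[R] Z) (x : R) : Submodule R (F × Z) :=
  LinearMap.eqLocus (π ∘ₗ LinearMap.fst R F Z) (x • LinearMap.snd R F Z)

namespace mulPullback

variable {π : F →ₗ[R] Z} {x : R}

/-- The projection of the pullback to `F`. -/
def fst (π : F →ₗ[R] Z) (x : R) : mulPullback π x →ₗ[R] F :=
  LinearMap.fst R F Z ∘ₗ (mulPullback π x).subtype

/-- The projection of the pullback to `Z`. -/
def snd (π : F →ₗ[R] Z) (x : R) : mulPullback π x →ₗ[R] Z :=
  LinearMap.snd R F Z ∘ₗ (mulPullback π x).subtype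

/-- The map into the pullback with the two given components. -/
def lift (u : A →ₗ[R] F) (v : A →ₗ[R] Z) (huv : ∀ a, π (u a) = x • v a) :
    A →ₗ[R] mulPullback π x :=
  (u.prod v).codRestrict _ huv

lemma map_fst (w : mulPullback π x) : π (fst π x w) = x • snd π x w := w.2

lemma ext {w w' : mulPullback π x} (hfst : fst π x w = fst π x w')
    (hsnd : snd π x w = snd π x w') : w = w' :=
  Subtype.ext (Prod.ext hfst hsnd)

lemma exists_fst_snd_eq {f : F} {z : Z} (h : π f = x • z) :
    ∃ w : mulPullback π x, fst π x w = f ∧ snd π x w = z :=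
  ⟨⟨(f, z), h⟩, rfl, rfl⟩

section

variable {u : A →ₗ[R] F} {v : A →ₗ[R] Z} (huv : ∀ a, π (u a) = x • v a) (a : A)

@[simp] lemma fst_lift : fst π x (lift u v huv a) = u a := rfl

@[simp] lemma snd_lift : snd π x (lift u v huv a) = v a := rfl

end

lemma isSES_ker_snd (hπ : Function.Surjective π) (x : R) :
    IsSES (lift (π := π) (x := x) (LinearMap.ker π).subtype 0 (by simp)) (snd π x) := by
  refine .of_forall (fun f hf => Subtype.ext (congrArg (fst π x) hf)) (fun z => ?_)
    (fun f => rfl) fun w hw => ?_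
  · obtain ⟨f, hf⟩ := hπ (x • z)
    obtain ⟨w, -, hw⟩ := exists_fst_snd_eq hf
    exact ⟨w, hw⟩
  · exact ⟨⟨fst π x w, by simp [map_fst, hw]⟩, ext rfl hw.symm⟩

lemma isSES_mul (hπ : Function.Surjective π) (x y : R) :
    ∃ (f : mulPullback π x →ₗ[R] mulPullback π (x * y) × F)
      (g : mulPullback π (x * y) × F →ₗ[R] mulPullback π y), IsSES f g := by
  refine ⟨(lift (y • fst π x) (snd π x) fun w => ?_).prod (-fst π x),
    lift ((fst π (x * y)).coprod (y • LinearMap.id)) ((x • snd π (x * y)).coprod π) fun w => ?_,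
    .of_forall (fun w hw => ?_) (fun w => ?_) (fun w => ?_) ?_⟩
  · simp [map_fst, smul_smul, mul_comm]
  · simp [map_fst, smul_smul, mul_comm]
  · exact ext (neg_eq_zero.1 (congrArg Prod.snd hw))
      (congrArg (fun p => snd π (x * y) p.1) hw)
  · obtain ⟨f, hf⟩ := hπ (snd π y w)
    obtain ⟨w', hfst, hsnd⟩ := exists_fst_snd_eq (π := π) (x := x * y) (f := fst π y w - y • f)
      (z := 0) (by simp [map_fst, hf])
    exact ⟨(w', f), ext (by simp [hfst]) (by simp [hsnd, hf])⟩
  · exact ext (by simp) (by simp [map_fst])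
  · rintro ⟨w, f⟩ hw
    have hfst : fst π (x * y) w + y • f = 0 := congrArg (fst π y) hw
    have hsnd : x • snd π (x * y) w + π f = 0 := congrArg (snd π y) hw
    obtain ⟨w', hfst', hsnd'⟩ := exists_fst_snd_eq (π := π) (x := x) (f := -f)
      (z := snd π (x * y) w) (by simpa using (eq_neg_of_add_eq_zero_left hsnd).symm)
    refine ⟨w', Prod.ext (ext ?_ ?_) ?_⟩
    · simpa [hfst'] using (eq_neg_of_add_eq_zero_left hfst).symm
    · simp [hsnd']
    · simp [hfst']

lemma bijective_lift_one (π : F →ₗ[R] Z) :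
    Function.Bijective (lift (π := π) (x := 1) LinearMap.id π (by simp)) :=
  ⟨fun _ _ hab => congrArg (fst π 1) hab,
    fun w => ⟨fst π 1 w, ext rfl (by simp [map_fst])⟩⟩

lemma bijective_lift_id (x : R) :
    Function.Bijective (lift (π := LinearMap.id (M := Z)) (x := x) (x • LinearMap.id)
      LinearMap.id (by simp)) :=
  ⟨fun _ _ hab => congrArg (snd LinearMap.id x) hab,
    fun w => ⟨snd LinearMap.id x w, ext (map_fst w).symm rfl⟩⟩

lemma nonempty_equiv_prod_ker {s : Z →ₗ[R] F} (hs : ∀ z, π (s z) = x • z) :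
    Nonempty (mulPullback π x ≃ₗ[R] Z × LinearMap.ker π) := by
  have hker : ∀ w, fst π x w - s (snd π x w) ∈ LinearMap.ker π := fun w => by simp [map_fst, hs]
  refine ⟨.ofBijective ((snd π x).prod ((fst π x - s ∘ₗ snd π x).codRestrict _ hker)) ⟨?_, ?_⟩⟩
  · intro w w' hw
    have hsnd : snd π x w = snd π x w' := congrArg Prod.fst hw
    have hfst : fst π x w - s (snd π x w) = fst π x w' - s (snd π x w') := congrArg (·.2.1) hw
    exact ext (by simpa [hsnd] using hfst) hsnd
  · rintro ⟨z, f, hf : π f = 0⟩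
    obtain ⟨w, hfst, hsnd⟩ := exists_fst_snd_eq (π := π) (x := x) (f := f + s z) (z := z)
      (by simp [hs, hf])
    exact ⟨w, Prod.ext hsnd (Subtype.ext (by simp [hfst, hsnd]))⟩

lemma isSES_cover {i : K →ₗ[R] F} {g : F →ₗ[R] Z} (h : IsSES i g) {ρ : P →ₗ[R] K}
    (hρ : Function.Surjective ρ) (x : R) :
    ∃ G : P × F →ₗ[R] mulPullback g x, IsSES ((fst ρ x).prod (i ∘ₗ snd ρ x)) G := by
  have hlift : ∀ p : P × F, g (((-(i ∘ₗ ρ)).coprod (x • LinearMap.id)) p) =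
      x • (g ∘ₗ LinearMap.snd R P F) p := fun p => by simp [h.apply_apply_eq_zero]
  refine ⟨lift _ _ hlift, .of_forall (fun w hw => ?_) (fun w => ?_) (fun w => ?_) ?_⟩
  · have hfst : fst ρ x w = 0 := congrArg Prod.fst hw
    have hsnd : i (snd ρ x w) = i 0 := (congrArg Prod.snd hw).trans (map_zero i).symm
    exact ext (by simp [hfst]) (by simp [h.1 hsnd])
  · obtain ⟨b, hb⟩ := h.2.1 (snd g x w)
    obtain ⟨k, hk⟩ := h.exists_apply_eq (b := x • b - fst g x w) (by simp [map_fst, hb])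
    obtain ⟨a, rfl⟩ := hρ k
    exact ⟨(a, b), ext (by simp [hk]) hb⟩
  · exact ext (by simp [map_fst]) (by simp [h.apply_apply_eq_zero])
  · rintro ⟨a, b⟩ hw
    have hfst : -i (ρ a) + x • b = 0 := congrArg (fst g x) hw
    obtain ⟨k, rfl⟩ := h.exists_apply_eq (congrArg (snd g x) hw : g b = 0)
    obtain ⟨w, rfl, rfl⟩ := exists_fst_snd_eq (π := ρ) (x := x) (f := a) (z := k)
      (h.1 (by simpa using neg_add_eq_zero.1 hfst))
    exact ⟨w, rfl⟩

end mulPullback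

namespace IsResolving

variable {𝒳 : Set (ModuleCat.{u} R)} [Module.Finite R F] [Module.Projective R F] {π : F →ₗ[R] Z}

lemma mulPullback_pow_mem (hX : IsResolving R 𝒳) (hπ : Function.Surjective π) {x : R}
    (h : ModuleCat.of R (mulPullback π x) ∈ 𝒳) (n : ℕ) :
    ModuleCat.of R (mulPullback π (x ^ n)) ∈ 𝒳 := by
  induction n with
  | zero =>
    rw [pow_zero]
    exact hX.mem_of_equiv (.ofBijective _ (mulPullback.bijective_lift_one π)) hX.mem_of_projective
  | succ n ih =>
    obtain ⟨f, g, hfg⟩ := mulPullback.isSES_mul hπ (x ^ n) x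
    exact pow_succ x n ▸ hX.mem_fst (hX.mem_of_isSES hfg ih h)

theorem mulPullback_mem_iff [IsNoetherianRing R] (hX : IsResolving R 𝒳)
    (hπ : Function.Surjective π) {x : R} (hZ : IsProjectiveAway x Z) :
    ModuleCat.of R (mulPullback π x) ∈ 𝒳 ↔ ModuleCat.of R Z ∈ 𝒳 := by
  constructor
  · intro h
    obtain ⟨n, s, hs⟩ := hZ.exists_section hπ
    obtain ⟨e⟩ := mulPullback.nonempty_equiv_prod_ker hs
    exact hX.mem_fst (hX.mem_of_equiv e (hX.mulPullback_pow_mem hπ h n))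
  · intro h
    exact hX.mem_of_isSES (mulPullback.isSES_ker_snd hπ x)
      (hX.mem_syzygy (.of_surjective hπ) h) h

end IsResolving

end MulPullback

section PD0

open IsLocalRing

/-- The module `N` belongs to `PD_0^{n-1}(R)`, freeness on the punctured spectrum being encoded by
`IsProjectiveAway`. The strict bound on the projective dimension makes `n = 0` the class of zero
modules. -/
structure MemPD0LT (R : Type u) [CommRing R] [IsLocalRing R] (n : ℕ) (N : Type u)
    [AddCommGroup N] [Module R N] : Prop where
  finite : Module.Finite R N
  hasProjectiveDimensionLT : HasProjectiveDimensionLT (ModuleCat.of R N) n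
  isProjectiveAway : ∀ x ∈ maximalIdeal R, IsProjectiveAway x N

variable {R : Type u} [CommRing R] [IsLocalRing R] {A B C : Type u} [AddCommGroup A] [Module R A]
  [AddCommGroup B] [Module R B] [AddCommGroup C] [Module R C] {n : ℕ}

namespace MemPD0LT

lemma retract (hB : MemPD0LT R n B) (i : A →ₗ[R] B) (p : B →ₗ[R] A) (hpi : ∀ a, p (i a) = a) :
    MemPD0LT R n A where
  finite := have := hB.finite; .of_surjective p fun a => ⟨i a, hpi a⟩
  hasProjectiveDimensionLT :=
    have := hB.hasProjectiveDimensionLT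
    Retract.hasProjectiveDimensionLT (Y := ModuleCat.of R B)
      ⟨ModuleCat.ofHom i, ModuleCat.ofHom p, by ext a; exact hpi a⟩ n
  isProjectiveAway x hx := (hB.isProjectiveAway x hx).retract i p hpi

lemma of_equiv (hA : MemPD0LT R n A) (e : A ≃ₗ[R] B) : MemPD0LT R n B :=
  hA.retract e.symm.toLinearMap e.toLinearMap e.apply_symm_apply

lemma mono (h : MemPD0LT R n A) {m : ℕ} (hnm : n ≤ m) : MemPD0LT R m A where
  finite := h.finite
  hasProjectiveDimensionLT :=
    have := h.hasProjectiveDimensionLT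
    hasProjectiveDimensionLT_of_ge _ n m hnm
  isProjectiveAway := h.isProjectiveAway

lemma middle {f : A →ₗ[R] B} {g : B →ₗ[R] C} (h : IsSES f g) (hA : MemPD0LT R n A)
    (hC : MemPD0LT R n C) : MemPD0LT R n B where
  finite := have := hA.finite; have := hC.finite; .of_exact h.exact h.2.1
  hasProjectiveDimensionLT :=
    h.shortExact.hasProjectiveDimensionLT_X₂ n hA.hasProjectiveDimensionLT
      hC.hasProjectiveDimensionLT
  isProjectiveAway x hx := .middle h (hA.isProjectiveAway x hx) (hC.isProjectiveAway x hx)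

lemma of_projective [Module.Finite R A] [Module.Projective R A] : MemPD0LT R (n + 1) A where
  finite := inferInstance
  hasProjectiveDimensionLT := hasProjectiveDimensionLT_succ_of_projective n
  isProjectiveAway _ _ := .of_projective

lemma syzygy [IsNoetherianRing R] {f : A →ₗ[R] B} {g : B →ₗ[R] C} (h : IsSES f g)
    [Module.Finite R B] [Module.Projective R B] (hC : MemPD0LT R (n + 2) C) :
    MemPD0LT R (n + 1) A where
  finite := .of_injective f h.1
  hasProjectiveDimensionLT :=
    (h.hasProjectiveDimensionLT_left_iff n).2 hC.hasProjectiveDimensionLT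
  isProjectiveAway x hx := .left h .of_projective (hC.isProjectiveAway x hx)

lemma prod (hA : MemPD0LT R n A) (hB : MemPD0LT R n B) : MemPD0LT R n (A × B) :=
  .middle .inl_snd hA hB

lemma isResolving [IsNoetherianRing R] (n : ℕ) :
    IsResolving R {N : ModuleCat.{u} R | MemPD0LT R (n + 1) N} where
  fg _ h := h.finite
  iso_closed _ _ := fun ⟨e⟩ h => h.of_equiv e
  proj_mem _ _ _ := .of_projective
  summand_closed M N h := MemPD0LT.retract h (.inl R M N) (.fst R M N) fun _ => rfl
  ext_closed _ _ _ _ _ h hA hC := .middle h hA hC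
  syzygy_closed _ _ _ _ _ h _ _ _ hM := .syzygy h (MemPD0LT.mono hM (by omega))

end MemPD0LT

lemma mem_PD0n_iff [IsNoetherianRing R] {N : ModuleCat.{u} R} :
    N ∈ PD0n R n ↔ MemPD0LT R (n + 1) N := by
  constructor
  · rintro ⟨hfin, hpd, hfree⟩
    have := Module.finitePresentation_of_finite R N
    exact ⟨hfin, pdLE_iff_hasProjectiveDimensionLE.1 hpd,
      forall_free_localization_iff_forall_isProjectiveAway.1 hfree⟩
  · rintro ⟨hfin, hpd, haway⟩
    have := Module.finitePresentation_of_finite R N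
    exact ⟨hfin, pdLE_iff_hasProjectiveDimensionLE.2 hpd,
      forall_free_localization_iff_forall_isProjectiveAway.2 haway⟩

end PD0

section Syzygy

variable {R : Type u} [CommRing R] {m : ℕ} {Z J J' : ModuleCat.{u} R}

lemma IsSES.isSyz_succ {F K : Type u} [AddCommGroup F] [Module R F] [AddCommGroup K] [Module R K]
    [Module.Finite R F] [Module.Projective R F] {i : K →ₗ[R] F} {g : F →ₗ[R] Z} (h : IsSES i g)
    (hJ : IsSyz R m (ModuleCat.of R K) J) : IsSyz R (m + 1) Z J :=
  ⟨ModuleCat.of R F, g, ModuleCat.of R K, i, ‹_›, ‹_›, h.2.1, h.1, h.2.2, hJ⟩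

namespace IsSyz

lemma of_equiv (h : IsSyz R m Z J) (e : J ≃ₗ[R] J') : IsSyz R m Z J' := by
  induction m generalizing Z with
  | zero =>
    obtain ⟨e'⟩ := h
    exact ⟨e.symm.trans e'⟩
  | succ m ih =>
    obtain ⟨F, g, K, i, _, _, hg, hi, hig, hK⟩ := h
    exact IsSES.isSyz_succ ⟨hi, hg, hig⟩ (ih hK)

lemma exists_isSES (h : IsSyz R (m + 1) Z J) :
    ∃ (J' F : ModuleCat.{u} R) (f : J →ₗ[R] F) (g : F →ₗ[R] J'),
      Module.Finite R F ∧ Module.Projective R F ∧ IsSyz R m Z J' ∧ IsSES f g := by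
  induction m generalizing Z with
  | zero =>
    obtain ⟨F, g, K, i, hF, hF', hg, hi, hig, ⟨e⟩⟩ := h
    exact ⟨Z, F, _, g, hF, hF', ⟨.refl R Z⟩, IsSES.comp_equiv ⟨hi, hg, hig⟩ e⟩
  | succ m ih =>
    obtain ⟨F, g, K, i, _, _, hg, hi, hig, hK⟩ := h
    obtain ⟨J', F', f', g', hF', hF'', hJ', hses⟩ := ih hK
    exact ⟨J', F', f', g', hF', hF'', IsSES.isSyz_succ ⟨hi, hg, hig⟩ hJ', hses⟩

lemma finite [IsNoetherianRing R] [Module.Finite R Z] (h : IsSyz R m Z J) : Module.Finite R J := by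
  induction m generalizing Z with
  | zero =>
    obtain ⟨e⟩ := h
    exact .equiv e.symm
  | succ m ih =>
    obtain ⟨F, -, K, i, _, _, -, hi, -, hK⟩ := h
    have : Module.Finite R K := .of_injective i hi
    exact ih hK

lemma hasProjectiveDimensionLT_iff (h : IsSyz R m Z J) (n : ℕ) :
    HasProjectiveDimensionLT J (n + 1) ↔ HasProjectiveDimensionLT Z (m + n + 1) := by
  induction m generalizing Z with
  | zero =>
    obtain ⟨e⟩ := h
    rw [zero_add]
    have e' : J ≅ Z := e.toModuleIso
    exact ⟨fun _ => e'.symm.retract.hasProjectiveDimensionLT _,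
      fun _ => e'.retract.hasProjectiveDimensionLT _⟩
  | succ m ih =>
    obtain ⟨F, g, K, i, _, _, hg, hi, hig, hK⟩ := h
    rw [ih hK, Nat.add_right_comm m 1 n]
    exact IsSES.hasProjectiveDimensionLT_left_iff ⟨hi, hg, hig⟩ (m + n)

end IsSyz

lemma exists_isSyz [IsNoetherianRing R] (m : ℕ) (Z : ModuleCat.{u} R) [Module.Finite R Z] :
    ∃ J : ModuleCat.{u} R, IsSyz R m Z J := by
  induction m generalizing Z with
  | zero => exact ⟨Z, ⟨.refl R Z⟩⟩
  | succ m ih =>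
    obtain ⟨k, π, hπ⟩ := Module.Finite.exists_fin' R Z
    obtain ⟨J, hJ⟩ := ih (ModuleCat.of R (LinearMap.ker π))
    exact ⟨J, (IsSES.of_surjective hπ).isSyz_succ hJ⟩

lemma IsSyz.memPD0LT [IsLocalRing R] [IsNoetherianRing R] (h : IsSyz R m Z J) {n : ℕ}
    (hZ : MemPD0LT R (m + n + 1) Z) : MemPD0LT R (n + 1) J := by
  induction m generalizing Z with
  | zero =>
    obtain ⟨e⟩ := h
    exact (zero_add n ▸ hZ).of_equiv e.symm
  | succ m ih =>
    obtain ⟨F, g, K, i, _, _, hg, hi, hig, hK⟩ := h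
    rw [Nat.add_right_comm m 1 n] at hZ
    exact ih hK (.syzygy ⟨hi, hg, hig⟩ hZ)

end Syzygy

section Tor

variable {R : Type u} [CommRing R] {A B N : Type u} [AddCommGroup A] [Module R A]
  [AddCommGroup B] [Module R B] [AddCommGroup N] [Module R N]

-- This is the vanishing of `Tor_{k+1}(N, M)`, computed from a presentation of a syzygy of `M`.
lemma IsSyz.injective_lTensor {k : ℕ} {M J : ModuleCat.{u} R} (hJ : IsSyz R k M J)
    {f : A →ₗ[R] B} {g : B →ₗ[R] J} (h : IsSES f g) [Module.Projective R B]
    (hN : HasProjectiveDimensionLT (ModuleCat.of R N) (k + 1)) :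
    Function.Injective (f.lTensor N) := by
  induction k generalizing A B N J with
  | zero =>
    have := moduleProjective_iff_hasProjectiveDimensionLT_one.2 hN
    exact Module.Flat.lTensor_preserves_injective_linearMap f h.1
  | succ k ih =>
    obtain ⟨J', F, u, v, _, _, hJ', huv⟩ := hJ.exists_isSES
    have hcover := IsSES.of_surjective (Finsupp.linearCombination_id_surjective R N)
    let K := LinearMap.ker (Finsupp.linearCombination R (id : N → N))
    have hK := ih hJ' huv ((hcover.hasProjectiveDimensionLT_left_iff k).2 hN)
    have hcomm : u.lTensor _ ∘ₗ K.subtype.rTensor J = K.subtype.rTensor F ∘ₗ u.lTensor _ := by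
      rw [LinearMap.lTensor_comp_rTensor, LinearMap.rTensor_comp_lTensor]
    have hinj : Function.Injective (K.subtype.rTensor J) := by
      refine Function.Injective.of_comp (f := u.lTensor _) ?_
      rw [← LinearMap.coe_comp, hcomm]
      exact (Module.Flat.rTensor_preserves_injective_linearMap K.subtype hcover.1).comp hK
    exact lTensor_injective_of_exact_of_exact_of_rTensor_injective (M₁ := K)
      hcover.exact hcover.2.1 h.exact h.2.1 hinj
      (Module.Flat.lTensor_preserves_injective_linearMap f h.1)

end Tor

section MinimalPresentation

open IsLocalRing TensorProduct

variable {R : Type u} [CommRing R] {I : Ideal R} {B N P : Type u} [AddCommGroup B] [Module R B]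
  [AddCommGroup N] [Module R N] [AddCommGroup P] [Module R P]

lemma tmul_eq_zero_of_mem_smul_top {z : N} (hz : ∀ x ∈ I, x • z = 0) {y : B}
    (hy : y ∈ I • (⊤ : Submodule R B)) : z ⊗ₜ[R] y = 0 := by
  refine Submodule.smul_induction_on hy (fun x hx y _ => ?_) fun y y' hy hy' => ?_
  · rw [TensorProduct.tmul_smul, TensorProduct.smul_tmul', hz x hx, TensorProduct.zero_tmul]
  · rw [TensorProduct.tmul_add, hy, hy', add_zero]

lemma exists_eq_sum_smul_of_forall_mem_smul_top [Module.Projective R P] {r : ℕ} (x : Fin r → R)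
    {d : P →ₗ[R] B} (hd : ∀ p, d p ∈ Ideal.span (Set.range x) • (⊤ : Submodule R B)) :
    ∃ D : Fin r → P →ₗ[R] B, d = ∑ i, x i • D i := by
  let Φ : (Fin r → B) →ₗ[R] B := ∑ i, x i • LinearMap.proj i
  have hΦ : Ideal.span (Set.range x) • (⊤ : Submodule R B) ≤ LinearMap.range Φ := by
    refine Submodule.smul_le.2 fun c hc b _ => ?_
    obtain ⟨w, rfl⟩ := Ideal.mem_span_range_iff_exists_fun.1 hc
    exact ⟨fun i => w i • b, by
      simp [Φ, LinearMap.sum_apply, Finset.sum_smul, smul_smul, mul_comm]⟩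
  obtain ⟨D, hD⟩ := Module.projective_lifting_property Φ.rangeRestrict
    (d.codRestrict _ fun p => hΦ (hd p)) Φ.surjective_rangeRestrict
  refine ⟨fun i => LinearMap.proj i ∘ₗ D, LinearMap.ext fun p => ?_⟩
  simpa [Φ, LinearMap.sum_apply] using congrArg Subtype.val (LinearMap.congr_fun hD p).symm

variable [IsLocalRing R] (J : Type u) [AddCommGroup J] [Module R J] [Module.Finite R J]

lemma exists_minimal_cover : ∃ (b : ℕ) (π : (Fin b → R) →ₗ[R] J), Function.Surjective π ∧
    LinearMap.ker π ≤ maximalIdeal R • ⊤ := by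
  let 𝓑 := Module.finBasis (ResidueField R) (ResidueField R ⊗[R] J)
  choose f hf using fun i => TensorProduct.mk_surjective R J (ResidueField R) residue_surjective
    (𝓑 i)
  have hspan : Submodule.span R (Set.range f) = ⊤ := span_eq_top_of_tmul_eq_basis f 𝓑 hf
  refine ⟨_, Fintype.linearCombination R f, ?_, fun v hv => ?_⟩
  · rwa [← LinearMap.range_eq_top, Fintype.range_linearCombination]
  · have hsum : ∑ i, residue R (v i) • 𝓑 i = 0 := by
      have htmul := congrArg (TensorProduct.mk R (ResidueField R) J 1) hv
      simpa [Fintype.linearCombination_apply, hf, ← ResidueField.algebraMap_eq] using htmul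
    have hmem : ∀ i, v i ∈ maximalIdeal R := fun i =>
      (residue_eq_zero_iff _).1 (Fintype.linearIndependent_iff.1 𝓑.linearIndependent _ hsum i)
    rw [pi_eq_sum_univ' v]
    exact Submodule.sum_mem _ fun i _ => Submodule.smul_mem_smul (hmem i) trivial

lemma exists_minimal_presentation [IsNoetherianRing R]
    (hJ : HasProjectiveDimensionLT (ModuleCat.of R J) 2) :
    ∃ (a b : ℕ) (d : (Fin a → R) →ₗ[R] (Fin b → R)) (π : (Fin b → R) →ₗ[R] J),
      IsSES d π ∧ ∀ v, d v ∈ maximalIdeal R • (⊤ : Submodule R (Fin b → R)) := by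
  obtain ⟨b, π, hπ, hker⟩ := exists_minimal_cover (R := R) J
  have hses := IsSES.of_surjective hπ
  have : Module.Projective R (LinearMap.ker π) :=
    moduleProjective_iff_hasProjectiveDimensionLT_one.2
      ((hses.hasProjectiveDimensionLT_left_iff 0).2 hJ)
  have : Module.Free R (LinearMap.ker π) := Module.free_of_flat_of_isLocalRing
  let e := (Module.finBasis R (LinearMap.ker π)).equivFun.symm
  exact ⟨_, b, (LinearMap.ker π).subtype ∘ₗ e.toLinearMap, π, hses.comp_equiv e,
    fun v => hker (e v).2⟩

-- Otherwise `Tor_n(N, M) = 0` would force `N` to vanish, a minimal resolution of `M` having length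
-- `n` and differentials with entries in the maximal ideal.
theorem torsionBySet_maximalIdeal_eq_bot [IsNoetherianRing R] {M : Type u} [AddCommGroup M]
    [Module R M] [Module.Finite R M] {n : ℕ}
    (hM : HasProjectiveDimensionLT (ModuleCat.of R M) (n + 1))
    (hM' : ¬ HasProjectiveDimensionLT (ModuleCat.of R M) n)
    (hN : HasProjectiveDimensionLT (ModuleCat.of R N) n) :
    Submodule.torsionBySet R N (maximalIdeal R) = ⊥ := by
  refine (Submodule.eq_bot_iff _).2 fun z hz => ?_
  replace hz : ∀ x ∈ maximalIdeal R, x • z = 0 := fun x hx =>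
    (Submodule.mem_torsionBySet_iff _ _).1 hz ⟨x, hx⟩
  obtain _ | k := n
  · have := hasProjectiveDimensionLT_zero_iff_subsingleton.1 hN
    exact Subsingleton.elim _ _
  obtain ⟨J, hJ⟩ := exists_isSyz k (ModuleCat.of R M)
  have := hJ.finite
  obtain ⟨a, b, d, π, hses, hd⟩ :=
    exists_minimal_presentation J ((hJ.hasProjectiveDimensionLT_iff 1).2 hM)
  obtain _ | a := a
  · have hpd := hses.hasProjectiveDimensionLT_right
      (hasProjectiveDimensionLT_zero_iff_subsingleton.2 inferInstance)
    exact absurd ((hJ.hasProjectiveDimensionLT_iff 0).1 hpd) hM'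
  have hinj := hJ.injective_lTensor hses hN
  have hztmul : z ⊗ₜ[R] (Pi.single 0 1 : Fin (a + 1) → R) = 0 := hinj <| by
    rw [LinearMap.lTensor_tmul, tmul_eq_zero_of_mem_smul_top hz (hd _), map_zero]
  simpa using congrArg (TensorProduct.rid R N <| (LinearMap.proj 0).lTensor N ·) hztmul

end MinimalPresentation

section Reduction

open IsLocalRing

variable {R : Type u} [CommRing R] {A B C D : Type u} [AddCommGroup A] [Module R A]
  [AddCommGroup B] [Module R B] [AddCommGroup C] [Module R C] [AddCommGroup D] [Module R D]

/-- Two modules are resolving equivalent if they lie in the same resolving subcategories. -/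
def ResolvingEquiv (Z Z' : ModuleCat.{u} R) : Prop :=
  ∀ 𝒳 : Set (ModuleCat.{u} R), IsResolving R 𝒳 → (Z ∈ 𝒳 ↔ Z' ∈ 𝒳)

/-- The map `A → Aʳ` given by the column `x`. -/
abbrev columnMap {r : ℕ} (x : Fin r → R) (A : Type u) [AddCommGroup A] [Module R A] :
    A →ₗ[R] (Fin r → A) :=
  LinearMap.pi fun i => x i • LinearMap.id

/-- The cokernel of the column `x : R → Rʳ`. When `x` generates the maximal ideal, it is the
transpose of the residue field, up to projective summands. -/
abbrev ColumnCokernel {r : ℕ} (x : Fin r → R) : Type u := (Fin r → R) ⧸ Submodule.span R {x}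

lemma IsSES.prod_comp {f : A →ₗ[R] B} {g : B →ₗ[R] C} (h : IsSES f g) (t : B →ₗ[R] D) :
    IsSES (f.prod (t ∘ₗ f)) ((g ∘ₗ .fst R B D).prod (.snd R B D - t ∘ₗ .fst R B D)) := by
  refine .of_forall (fun a ha => ?_) ?_ (fun a => ?_) ?_
  · exact (injective_iff_map_eq_zero f).1 h.1 a (congrArg Prod.fst ha)
  · rintro ⟨c, d⟩
    obtain ⟨b, rfl⟩ := h.2.1 c
    exact ⟨(b, d + t b), by simp⟩
  · simp [h.apply_apply_eq_zero]
  · rintro ⟨b, d⟩ hbd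
    obtain ⟨a, rfl⟩ := h.exists_apply_eq (congrArg Prod.fst hbd : g b = 0)
    exact ⟨a, Prod.ext rfl (sub_eq_zero.1 (congrArg Prod.snd hbd)).symm⟩

lemma isSES_columnCokernel {r a : ℕ} (x : Fin r → R)
    (hx : Function.Injective (columnMap x (Fin a → R))) :
    ∃ g : (Fin r → Fin a → R) →ₗ[R] (Fin a → ColumnCokernel x),
      IsSES (columnMap x (Fin a → R)) g := by
  let g : (Fin r → Fin a → R) →ₗ[R] (Fin a → ColumnCokernel x) := LinearMap.pi fun j =>
    (Submodule.span R {x}).mkQ ∘ₗ LinearMap.pi fun i => LinearMap.proj j ∘ₗ LinearMap.proj i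
  have hg : ∀ w, g w = 0 ↔ ∀ j, ∃ c : R, c • x = fun i => w i j := fun w => by
    rw [funext_iff]
    exact forall_congr' fun j =>
      (Submodule.Quotient.mk_eq_zero _).trans Submodule.mem_span_singleton
  refine ⟨g, .of_exact hx (fun u => ?_) fun w => ?_⟩
  · choose v hv using fun j => Submodule.mkQ_surjective _ (u j)
    exact ⟨fun i j => v j i, funext hv⟩
  · rw [hg]
    constructor
    · intro h
      choose v hv using h
      exact ⟨v, by ext i j; simpa [mul_comm] using congrFun (hv j) i⟩
    · rintro ⟨v, rfl⟩ j
      exact ⟨v j, by ext i; simp [mul_comm]⟩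

variable [Module.Finite R B] [Module.Projective R B] {d : A →ₗ[R] B} {m : ℕ}

lemma IsSyz.exists_mulPullback {q : B →ₗ[R] C} (h : IsSES d q) {Z : ModuleCat.{u} R}
    (hZ : IsSyz R m Z (ModuleCat.of R C)) (x : R) :
    ∃ (F : ModuleCat.{u} R) (π : F →ₗ[R] Z) (J : ModuleCat.{u} R) (q' : A × B →ₗ[R] J),
      Module.Finite R F ∧ Module.Projective R F ∧ Function.Surjective π ∧
        IsSyz R m (ModuleCat.of R (mulPullback π x)) J ∧ IsSES ((x • LinearMap.id).prod d) q' := by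
  induction m generalizing Z with
  | zero =>
    obtain ⟨e⟩ := hZ
    obtain ⟨q', hq'⟩ := mulPullback.isSES_cover (h.equiv_comp e) Function.surjective_id (ρ := .id) x
    exact ⟨ModuleCat.of R B, _, ModuleCat.of R (mulPullback (e.toLinearMap ∘ₗ q) x), q', ‹_›, ‹_›,
      (h.equiv_comp e).2.1, ⟨.refl R _⟩,
      hq'.comp_equiv (.ofBijective _ (mulPullback.bijective_lift_id x))⟩
  | succ m ih =>
    obtain ⟨F, g, K, i, _, _, hg, hi, hig, hK⟩ := hZ
    obtain ⟨P, π, J, q', _, _, hπ, hJ, hq'⟩ := ih hK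
    obtain ⟨G, hG⟩ := mulPullback.isSES_cover ⟨hi, hg, hig⟩ hπ x
    exact ⟨F, g, J, q', ‹_›, ‹_›, hg, hG.isSyz_succ hJ, hq'⟩

variable [Module.Finite R A] [Module.Projective R A] [IsLocalRing R] [IsNoetherianRing R] {n : ℕ}

lemma ResolvingEquiv.memPD0LT {Z Z' : ModuleCat.{u} R} (h : ResolvingEquiv Z Z')
    (hZ : MemPD0LT R (n + 1) Z) : MemPD0LT R (n + 1) Z' :=
  (h _ (MemPD0LT.isResolving n)).1 hZ

lemma IsSyz.exists_resolvingEquiv_pi {q : B →ₗ[R] C} (h : IsSES d q) {Z : ModuleCat.{u} R}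
    (hZ : IsSyz R m Z (ModuleCat.of R C)) (hZn : MemPD0LT R (n + 1) Z) {r : ℕ} (x : Fin r → R)
    (hx : ∀ i, x i ∈ maximalIdeal R) :
    ∃ (Z' J : ModuleCat.{u} R) (q' : (Fin r → A) × B →ₗ[R] J), ResolvingEquiv Z Z' ∧
      IsSyz R m Z' J ∧ IsSES ((columnMap x A).prod d) q' := by
  induction r with
  | zero =>
    let e : ((Fin 0 → A) × B) ≃ₗ[R] B := .uniqueProd
    have hd : (columnMap x A).prod d = e.symm.toLinearMap ∘ₗ d :=
      LinearMap.ext fun v => Prod.ext (Subsingleton.elim _ _) rfl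
    exact ⟨Z, ModuleCat.of R C, q ∘ₗ e.toLinearMap, fun _ _ => .rfl, hZ, hd ▸ h.conj_equiv e.symm⟩
  | succ r ih =>
    obtain ⟨Z₁, J₁, q₁, hZZ₁, hJ₁, hq₁⟩ := ih (fun i => x i.succ) fun i => hx i.succ
    have : Module.Projective R (Fin r → A) :=
      .of_equiv (DFinsupp.linearEquivFunOnFintype (M := fun _ : Fin r => A))
    obtain ⟨F, π, J, q', _, _, hπ, hJ, hq'⟩ := hJ₁.exists_mulPullback hq₁ (x 0)
    have hZ₁ := (hZZ₁.memPD0LT hZn).isProjectiveAway (x 0) (hx 0)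
    let e : (A × (Fin r → A) × B) ≃ₗ[R] (Fin (r + 1) → A) × B :=
      (LinearEquiv.prodAssoc R A (Fin r → A) B).symm.trans
        ((Fin.consLinearEquiv R fun _ => A).prodCongr (.refl R B))
    have he : (columnMap x A).prod d = e.toLinearMap ∘ₗ
        (x 0 • LinearMap.id).prod ((columnMap (fun i => x i.succ) A).prod d) :=
      LinearMap.ext fun v => Prod.ext (funext (Fin.cases rfl fun _ => rfl)) rfl
    exact ⟨_, J, q' ∘ₗ e.symm.toLinearMap,
      fun 𝒳 hX => (hZZ₁ 𝒳 hX).trans (hX.mulPullback_mem_iff hπ hZ₁).symm, hJ,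
      he ▸ hq'.conj_equiv e⟩

theorem MemPD0LT.exists_resolvingEquiv_columnCokernel {r : ℕ} {x : Fin r → R}
    (hx : Ideal.span (Set.range x) = maximalIdeal R) {Z : ModuleCat.{u} R}
    (hZ : MemPD0LT R (m + 2) Z) :
    ∃ (Z' : ModuleCat.{u} R) (a b : ℕ), ResolvingEquiv Z Z' ∧
      IsSyz R m Z' (ModuleCat.of R ((Fin a → ColumnCokernel x) × (Fin b → R))) ∧
      (¬ HasProjectiveDimensionLT Z (m + 1) → a ≠ 0) := by
  have := hZ.finite
  obtain ⟨J, hJ⟩ := exists_isSyz m Z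
  have := hJ.finite
  obtain ⟨a, b, d, π, hdπ, hd⟩ :=
    exists_minimal_presentation J (hJ.hasProjectiveDimensionLT_iff 1 |>.2 hZ.2)
  have hxm : ∀ i, x i ∈ maximalIdeal R := fun i => hx ▸ Ideal.subset_span ⟨i, rfl⟩
  obtain ⟨Z', J', q', hZZ', hJ', hq'⟩ := hJ.exists_resolvingEquiv_pi hdπ hZ x hxm
  obtain ⟨D, rfl⟩ := exists_eq_sum_smul_of_forall_mem_smul_top x (hx.symm ▸ hd)
  let t : (Fin r → Fin a → R) →ₗ[R] Fin b → R := ∑ i, D i ∘ₗ LinearMap.proj i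
  have ht : ∑ i, x i • D i = t ∘ₗ columnMap x (Fin a → R) := by
    ext; simp [t]
  rw [ht] at hdπ hq'
  obtain ⟨g, hg⟩ := isSES_columnCokernel x (.of_comp hdπ.1)
  obtain ⟨e⟩ := hq'.nonempty_equiv_right (hg.prod_comp t)
  refine ⟨Z', a, b, hZZ', hJ'.of_equiv e, ?_⟩
  rintro hpd rfl
  have hJ0 := hdπ.hasProjectiveDimensionLT_right
    (hasProjectiveDimensionLT_zero_iff_subsingleton.2 inferInstance)
  exact hpd ((hJ.hasProjectiveDimensionLT_iff 0).1 hJ0)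

end Reduction

section Lifting

namespace IsSES

variable {R : Type u} [CommRing R] {A B C D P F Z : Type u} [AddCommGroup A] [Module R A]
  [AddCommGroup B] [Module R B] [AddCommGroup C] [Module R C] [AddCommGroup D] [Module R D]
  [AddCommGroup P] [Module R P] [AddCommGroup F] [Module R F] [AddCommGroup Z] [Module R Z]
  {f : A →ₗ[R] B} {g : B →ₗ[R] C}

lemma compLeft_prodMap_id (h : IsSES f g) (ι : Type) (G : Type u) [AddCommGroup G] [Module R G] :
    IsSES ((f.compLeft ι).prodMap (.id : G →ₗ[R] G)) (g.compLeft ι ∘ₗ .fst R (ι → B) G) := by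
  refine .of_exact ?_ ?_ fun y => ⟨fun hy => ?_, ?_⟩
  · exact (h.1.comp_left).prodMap Function.injective_id
  · exact (h.2.1.comp_left).comp LinearMap.fst_surjective
  · choose s hs using fun j => h.exists_apply_eq (congrFun hy j)
    exact ⟨(s, y.2), Prod.ext (funext hs) rfl⟩
  · rintro ⟨s, rfl⟩
    exact funext fun j => h.apply_apply_eq_zero (s.1 j)

lemma exists_isSES_ker_coprod {β : B →ₗ[R] D} (hβ : IsSES f β) {i : D →ₗ[R] F} {π : F →ₗ[R] Z}
    (hπ : IsSES i π) {φ : B →ₗ[R] P} {γ : P →ₗ[R] C} (hφ : IsSES φ γ) {e : P →ₗ[R] F}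
    (he : ∀ b, e (φ b) = i (β b)) :
    ∃ (t : C →ₗ[R] Z) (κ : P →ₗ[R] LinearMap.ker (t.coprod π)), IsSES (φ ∘ₗ f) κ := by
  obtain ⟨t, ht⟩ := hφ.exists_desc (π ∘ₗ e) fun b => by simp [he, hπ.apply_apply_eq_zero]
  let κ : P →ₗ[R] LinearMap.ker (t.coprod π) :=
    (γ.prod (-e)).codRestrict _ fun y => by simp [ht]
  refine ⟨t, κ, .of_forall (fun a ha => ?_) ?_ (fun a => ?_) fun y hy => ?_⟩
  · exact (injective_iff_map_eq_zero (φ ∘ₗ f)).1 (hφ.1.comp hβ.1) a ha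
  · rintro ⟨⟨c, w⟩, hw⟩
    obtain ⟨y, rfl⟩ := hφ.2.1 c
    have hw' : π (e y + w) = 0 := by
      rw [map_add]
      exact (congrArg (· + π w) (ht y)).symm.trans hw
    obtain ⟨k, hk⟩ := hπ.exists_apply_eq hw'
    obtain ⟨b, rfl⟩ := hβ.2.1 k
    exact ⟨y - φ b, Subtype.ext (Prod.ext (by simp [κ, hφ.apply_apply_eq_zero])
      (by simp [κ, he, hk]))⟩
  · exact Subtype.ext (Prod.ext (by simp [κ, hφ.apply_apply_eq_zero])
      (by simp [κ, he, hβ.apply_apply_eq_zero]))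
  · obtain ⟨b, rfl⟩ := hφ.exists_apply_eq (congrArg (fun p => p.1.1) hy : γ y = 0)
    have hb : -e (φ b) = 0 := congrArg (fun p => p.1.2) hy
    rw [he, neg_eq_zero] at hb
    obtain ⟨a, rfl⟩ := hβ.exists_apply_eq ((injective_iff_map_eq_zero i).1 hπ.1 _ hb)
    exact ⟨a, rfl⟩

lemma exists_isSES_prod_coprod (h : IsSES f g) {φ : B →ₗ[R] P} {q : P →ₗ[R] D}
    (hq : IsSES (φ ∘ₗ f) q) : ∃ t : C →ₗ[R] D, IsSES (g.prod φ) (t.coprod q) := by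
  obtain ⟨t, ht⟩ := h.exists_desc (-(q ∘ₗ φ)) fun a => by
    simpa using hq.apply_apply_eq_zero a
  refine ⟨t, .of_forall (fun b hb => ?_) (fun d => ?_) (fun b => by simp [ht]) ?_⟩
  · obtain ⟨a, rfl⟩ := h.exists_apply_eq (congrArg Prod.fst hb : g b = 0)
    rw [(injective_iff_map_eq_zero _).1 hq.1 a (congrArg Prod.snd hb), map_zero]
  · obtain ⟨p, rfl⟩ := hq.2.1 d
    exact ⟨(0, p), by simp⟩
  · rintro ⟨c, p⟩ hcp
    obtain ⟨b, rfl⟩ := h.2.1 c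
    have hp : q (p - φ b) = 0 := by
      simpa [ht, neg_add_eq_sub] using hcp
    obtain ⟨a, ha⟩ := hq.exists_apply_eq hp
    rw [LinearMap.comp_apply] at ha
    exact ⟨b + f a, Prod.ext (by simp [h.apply_apply_eq_zero]) (by simp [ha])⟩

end IsSES

open IsLocalRing

/-- `HasLifting R n S a Z` means that `Z` is stably a quotient of `Sᵃ` by a module of
`PD₀ⁿ⁻¹`: there is an exact sequence `0 → L → Sᵃ ⊕ G → Z → 0` with `G` finite projective and
`L` satisfying `MemPD0LT R n L`. -/
def HasLifting (R : Type u) [CommRing R] [IsLocalRing R] (n : ℕ) (S : Type u) [AddCommGroup S]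
    [Module R S] (a : ℕ) (Z : Type u) [AddCommGroup Z] [Module R Z] : Prop :=
  ∃ (G L : ModuleCat.{u} R) (f : L →ₗ[R] (Fin a → S) × G) (g : ((Fin a → S) × G) →ₗ[R] Z),
    Module.Finite R G ∧ Module.Projective R G ∧ MemPD0LT R n L ∧ IsSES f g

variable {R : Type u} [CommRing R] [IsLocalRing R] {A B C D F K P S S' Z : Type u}
  [AddCommGroup A] [Module R A] [AddCommGroup B] [Module R B] [AddCommGroup C] [Module R C]
  [AddCommGroup D] [Module R D] [AddCommGroup F] [Module R F] [AddCommGroup K] [Module R K]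
  [AddCommGroup P] [Module R P] [AddCommGroup S] [Module R S] [AddCommGroup S'] [Module R S']
  [AddCommGroup Z] [Module R Z] {𝒳 : Set (ModuleCat.{u} R)} {a m n : ℕ}

lemma MemPD0LT.right_of_surjective_dualMap [Module.Finite R P] [Module.Projective R P]
    {f : A →ₗ[R] B} {g : B →ₗ[R] C} (h : IsSES f g) (hA : MemPD0LT R n A)
    (hB : ∀ x ∈ maximalIdeal R, IsProjectiveAway x B)
    (hC : ∀ x ∈ maximalIdeal R, IsProjectiveAway x C) {φ : B →ₗ[R] P}
    (hφ : Function.Surjective φ.dualMap) {q : P →ₗ[R] D} (hq : IsSES (φ ∘ₗ f) q) :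
    MemPD0LT R (n + 1) D where
  finite := .of_surjective q hq.2.1
  hasProjectiveDimensionLT := hq.hasProjectiveDimensionLT_right hA.2
  isProjectiveAway x hx := by
    obtain ⟨e, ρ, hρ⟩ := (hB x hx).exists_extend hφ
    obtain ⟨e', t, ht⟩ := IsProjectiveAway.exists_retraction h (hC x hx)
    exact .right_of_retraction hq (e := e + e') (t ∘ₗ ρ) fun a => by
      simp [hρ, ht, pow_add, mul_smul]

lemma HasLifting.of_equiv {G : Type u} [AddCommGroup G] [Module R G] [Module.Finite R G]
    [Module.Projective R G] (e : ((Fin a → S) × G) ≃ₗ[R] Z) : HasLifting R 0 S a Z := by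
  let Zero : Type u := PUnit
  have hZero : MemPD0LT R 0 Zero :=
    ⟨inferInstance, hasProjectiveDimensionLT_zero_iff_subsingleton.2 inferInstance,
      fun _ _ => .of_projective⟩
  exact ⟨ModuleCat.of R G, ModuleCat.of R Zero, (0 : Zero →ₗ[R] _), e.toLinearMap, ‹_›, ‹_›, hZero,
    .of_exact (Function.injective_of_subsingleton _) e.surjective
      ((LinearMap.exact_zero_iff_injective Zero e.toLinearMap).2 e.injective)⟩

lemma HasLifting.mem_of_mem (hX : IsResolving R 𝒳)
    (hm : ∀ N : ModuleCat.{u} R, MemPD0LT R m N → N ∈ 𝒳) (h : HasLifting R m S a Z) (ha : a ≠ 0)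
    (hZ : ModuleCat.of R Z ∈ 𝒳) : ModuleCat.of R S ∈ 𝒳 := by
  obtain ⟨a, rfl⟩ := Nat.exists_eq_succ_of_ne_zero ha
  obtain ⟨G, L, f, g, -, -, hL, hfg⟩ := h
  have hSa := hX.mem_fst (hX.mem_of_isSES hfg (hm L hL) hZ)
  exact hX.mem_fst (hX.mem_of_equiv (Fin.consLinearEquiv R fun _ => S).symm hSa)

variable [IsNoetherianRing R]

lemma HasLifting.of_syzygy (hK : HasLifting R m S a K) {φ : S →ₗ[R] P} {ψ : P →ₗ[R] S'}
    (hφψ : IsSES φ ψ) (hφ : Function.Surjective φ.dualMap) [Module.Finite R P]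
    [Module.Projective R P] {i : K →ₗ[R] F} {π : F →ₗ[R] Z} (hπ : IsSES i π) [Module.Finite R F]
    [Module.Projective R F] (hS' : MemPD0LT R (n + 1) S') (hZ : MemPD0LT R (n + 1) Z) :
    HasLifting R (m + 1) S' a Z := by
  obtain ⟨G, L, f, β, _, _, hL, hβ⟩ := hK
  have hΦ := surjective_dualMap_prodMap (surjective_dualMap_compLeft hφ (Fin a))
    (ψ := (LinearMap.id : G →ₗ[R] G)) Function.surjective_id
  obtain ⟨e, he⟩ := exists_extend_of_surjective_dualMap hΦ (i ∘ₗ β)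
  obtain ⟨t, κ, hκ⟩ := hβ.exists_isSES_ker_coprod hπ (hφψ.compLeft_prodMap_id (Fin a) G) he
  have hT : Function.Surjective (t.coprod π) := fun z => by
    obtain ⟨w, rfl⟩ := hπ.2.1 z
    exact ⟨(0, w), by simp⟩
  have : Module.Projective R (Fin a → P) :=
    .of_equiv (DFinsupp.linearEquivFunOnFintype (M := fun _ : Fin a => P))
  have hS'F : MemPD0LT R (n + 1) ((Fin a → S') × F) :=
    .prod ((MemPD0LT.isResolving n).mem_pi hS' a) .of_projective
  have := hS'F.finite
  exact ⟨ModuleCat.of R F, ModuleCat.of R (LinearMap.ker (t.coprod π)), _, _, ‹_›, ‹_›,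
    ⟨inferInstance, hκ.hasProjectiveDimensionLT_right hL.2,
      fun x hx => (hS'F.3 x hx).left (.of_surjective hT) (hZ.3 x hx)⟩, .of_surjective hT⟩

lemma HasLifting.mem (hX : IsResolving R 𝒳)
    (hm : ∀ N : ModuleCat.{u} R, MemPD0LT R (m + 1) N → N ∈ 𝒳)
    (hsoc : ∀ N : ModuleCat.{u} R, MemPD0LT R (m + 1) N →
      Submodule.torsionBySet R N (maximalIdeal R) = ⊥)
    (h : HasLifting R m S a Z) (hS : MemPD0LT R (n + 1) S) (hZ : MemPD0LT R (n + 1) Z)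
    (hSX : ModuleCat.of R S ∈ 𝒳) : ModuleCat.of R Z ∈ 𝒳 := by
  obtain ⟨G, L, f, g, _, _, hL, hfg⟩ := h
  have hB : MemPD0LT R (n + 1) ((Fin a → S) × G) :=
    .prod ((MemPD0LT.isResolving n).mem_pi hS a) .of_projective
  have := hB.finite
  obtain ⟨k, φ, hφ⟩ := exists_surjective_dualMap_fin (R := R) ((Fin a → S) × G)
  have hinj : Function.Injective (φ ∘ₗ f) :=
    injective_comp_of_surjective_dualMap (maximalIdeal R).fg_of_isNoetherianRing
      (hsoc L (hL.mono m.le_succ)) hB.3 hfg.1 hφ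
  have hq := IsSES.of_injective hinj
  obtain ⟨t, ht⟩ := hfg.exists_isSES_prod_coprod hq
  have hD := hL.right_of_surjective_dualMap hfg hB.3 hZ.3 hφ hq
  have hBX := hX.mem_prod (hX.mem_pi hSX a) (hX.mem_of_projective (A := G))
  exact hX.mem_fst (hX.mem_of_isSES ht hBX (hm (.of R _) hD))

lemma MemPD0LT.exists_injective_surjective_dualMap (hS : MemPD0LT R n S)
    (hsoc : Submodule.torsionBySet R S (maximalIdeal R) = ⊥) :
    ∃ (k : ℕ) (φ : S →ₗ[R] Fin k → R), Function.Surjective φ.dualMap ∧ Function.Injective φ ∧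
      MemPD0LT R (n + 1) ((Fin k → R) ⧸ LinearMap.range φ) := by
  have := hS.finite
  obtain ⟨k, φ, hφ⟩ := exists_surjective_dualMap_fin (R := R) S
  have hinj : Function.Injective φ := injective_comp_of_surjective_dualMap
    (maximalIdeal R).fg_of_isNoetherianRing hsoc hS.3 (f := .id) Function.injective_id hφ
  have hses := IsSES.of_injective hinj
  refine ⟨k, φ, hφ, hinj, inferInstance, hses.hasProjectiveDimensionLT_right hS.2, fun x hx => ?_⟩
  obtain ⟨e, ρ, hρ⟩ := (hS.3 x hx).exists_extend hφ
  exact .right_of_retraction hses ρ hρ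

theorem exists_hasLifting_of_isSyz (J : ModuleCat.{u} R) (hJ : MemPD0LT R 2 J) (m : ℕ)
    (hsoc : ∀ N : ModuleCat.{u} R, MemPD0LT R (m + 1) N →
      Submodule.torsionBySet R N (maximalIdeal R) = ⊥) :
    ∃ S : ModuleCat.{u} R, MemPD0LT R (m + 2) S ∧ ∀ (Z : ModuleCat.{u} R) (a : ℕ)
      (G : ModuleCat.{u} R), Module.Finite R G → Module.Projective R G → MemPD0LT R (m + 2) Z →
        IsSyz R m Z (ModuleCat.of R ((Fin a → J) × G)) → HasLifting R m S a Z := by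
  induction m with
  | zero =>
    exact ⟨J, hJ, fun Z a G _ _ _ ⟨e⟩ => .of_equiv (G := G) e⟩
  | succ m ih =>
    obtain ⟨S, hS, H⟩ := ih fun N hN => hsoc N (hN.mono (m + 1).le_succ)
    obtain ⟨k, φ, hφ, hinj, hS'⟩ := hS.exists_injective_surjective_dualMap (hsoc S hS)
    refine ⟨ModuleCat.of R ((Fin k → R) ⧸ LinearMap.range φ), hS', fun Z a G hG hG' hZ hZG => ?_⟩
    obtain ⟨F, π, K, i, _, _, hπ, hi, hiπ, hK⟩ := hZG
    have hKF : IsSES i π := ⟨hi, hπ, hiπ⟩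
    exact (H K a G hG hG' (hZ.syzygy hKF) hK).of_syzygy (.of_injective hinj) hφ hKF hS' hZ

theorem exists_hasLifting {M : ModuleCat.{u} R} (hM : MemPD0LT R (m + 2) M)
    (hM' : ¬ HasProjectiveDimensionLT M (m + 1))
    (hsoc : ∀ N : ModuleCat.{u} R, MemPD0LT R (m + 1) N →
      Submodule.torsionBySet R N (maximalIdeal R) = ⊥) :
    ∃ S : ModuleCat.{u} R, MemPD0LT R (m + 2) S ∧
      ∀ Z : ModuleCat.{u} R, MemPD0LT R (m + 2) Z → ∃ (Z' : ModuleCat.{u} R) (a : ℕ),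
        ResolvingEquiv Z Z' ∧ HasLifting R m S a Z' ∧
          (¬ HasProjectiveDimensionLT Z (m + 1) → a ≠ 0) := by
  obtain ⟨r, x, hx⟩ := Submodule.fg_iff_exists_fin_generating_family.1
    (maximalIdeal R).fg_of_isNoetherianRing
  have hJ : MemPD0LT R 2 (ColumnCokernel x) := by
    obtain ⟨M', a, b, hMM', hsyz, ha⟩ := hM.exists_resolvingEquiv_columnCokernel hx
    let j : Fin a := ⟨0, Nat.pos_of_ne_zero (ha hM')⟩
    exact (hsyz.memPD0LT (hMM'.memPD0LT hM)).retract
      (.inl R _ _ ∘ₗ .single R (fun _ => ColumnCokernel x) j) (.proj j ∘ₗ .fst R _ _)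
      fun z => by simp
  obtain ⟨S, hS, H⟩ := exists_hasLifting_of_isSyz (.of R (ColumnCokernel x)) hJ m hsoc
  refine ⟨S, hS, fun Z hZ => ?_⟩
  obtain ⟨Z', a, b, hZZ', hsyz, ha⟩ := hZ.exists_resolvingEquiv_columnCokernel hx
  exact ⟨Z', a, hZZ', H Z' a (.of R (Fin b → R)) (inferInstanceAs (Module.Finite R (Fin b → R)))
    (inferInstanceAs (Module.Projective R (Fin b → R))) (hZZ'.memPD0LT hZ) hsyz, ha⟩

theorem mem_of_memPD0LT (hX : IsResolving R 𝒳) (n : ℕ) {M : ModuleCat.{u} R} (hMX : M ∈ 𝒳)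
    (hM : MemPD0LT R (n + 1) M) (hM' : n ≠ 0 → ¬ HasProjectiveDimensionLT M n)
    {N : ModuleCat.{u} R} (hN : MemPD0LT R (n + 1) N) : N ∈ 𝒳 := by
  induction n generalizing M N with
  | zero => exact hX.proj_mem N hN.1 (moduleProjective_iff_hasProjectiveDimensionLT_one.2 hN.2)
  | succ m ih =>
    replace hM' := hM' m.succ_ne_zero
    have := hM.finite
    have hm : ∀ N : ModuleCat.{u} R, MemPD0LT R (m + 1) N → N ∈ 𝒳 := fun N hN => by
      obtain ⟨k, π, hπ⟩ := Module.Finite.exists_fin' R M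
      have hK := IsSES.of_surjective hπ
      exact ih (M := .of R (LinearMap.ker π)) (hX.mem_syzygy hK hMX) (hM.syzygy hK)
        (fun _ h => hM' (hK.hasProjectiveDimensionLT_right h)) hN
    have hsoc : ∀ N : ModuleCat.{u} R, MemPD0LT R (m + 1) N →
        Submodule.torsionBySet R N (maximalIdeal R) = ⊥ := fun N hN =>
      torsionBySet_maximalIdeal_eq_bot hM.2 hM' hN.2
    obtain ⟨S, hS, H⟩ := exists_hasLifting hM hM' hsoc
    obtain ⟨M', a, hMM', hlift, ha⟩ := H M hM
    have hSX : S ∈ 𝒳 := hlift.mem_of_mem hX (fun L hL => hm L (hL.mono m.le_succ)) (ha hM')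
      ((hMM' 𝒳 hX).1 hMX)
    obtain ⟨N', b, hNN', hlift', -⟩ := H N hN
    exact (hNN' 𝒳 hX).2 (hlift'.mem hX hm hsoc hS (hNN'.memPD0LT hN) hSX)

end Lifting

/-- Corollary 2.9: for a module `M ∈ PD_0(R)` over a noetherian local ring,
`res M = PD_0^n(R)` where `n = pd M`. -/
theorem resClosure_eq_PD0n [IsNoetherianRing R] [IsLocalRing R]
    (M : ModuleCat.{u} R) (hfg : Module.Finite R M)
    (hfree : ∀ p : PrimeSpectrum R, p.asIdeal ≠ IsLocalRing.maximalIdeal R →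
      Module.Free (Localization.AtPrime p.asIdeal) (LocalizedModule p.asIdeal.primeCompl M))
    (n : ℕ) (hpd : pdim R M = ((n : ℕ∞) : WithBot ℕ∞)) :
    resClosure R {M} = PD0n R n := by
  have hM : M ∈ PD0n R n := ⟨hfg, pdLE_of_pdim_eq hpd, hfree⟩
  have hPD0n : PD0n R n = {N : ModuleCat.{u} R | MemPD0LT R (n + 1) N} :=
    Set.ext fun _ => mem_PD0n_iff
  rw [hPD0n] at hM ⊢
  have hpdM : n ≠ 0 → ¬ HasProjectiveDimensionLT M n := fun hn hlt => by
    obtain ⟨k, rfl⟩ := Nat.exists_eq_succ_of_ne_zero hn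
    exact k.not_succ_le_self (le_of_pdim_eq hpd (pdLE_iff_hasProjectiveDimensionLE.2 hlt))
  apply subset_antisymm
  · exact Set.sInter_subset_of_mem ⟨MemPD0LT.isResolving n, Set.singleton_subset_iff.2 hM⟩
  · rintro N hN 𝒳 ⟨hX, hMX⟩
    exact mem_of_memPD0LT hX n (hMX rfl) hM hpdM hN

end ResolvPaper
end

section
/- Let R be a commutative noetherian local ring. Let M be a finitely generated R-module of finite projective dimension that is free when localized at every nonmaximal prime, and let N be a finitely generated R-module of finite projective dimension. If pd_R M ≤ pd_R N, then M belongs to res N. -/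
universe u

open CategoryTheory

namespace ResolvPaper

variable (R : Type u) [CommRing R]

/-!
Let `𝒳` be a resolving subcategory containing `N`. A *test module* in degree `i` is a module that is
free on the punctured spectrum and has `Ext^i(Z, R)` simple as its only nonzero positive `Ext` into
`R`. If `i > 0` is the least degree with `Ext^i(M, R) ≠ 0`, a socle element of `Ext^i(M, R)` is
induced by a map `M → Z` to such a `Z`; passing to the fiber of this map replaces `Ext^i(M, R)` by a
proper quotient and does not enlarge the other `Ext^k(M, R)`, so if `𝒳` contains test modules in all
degrees `≤ pd M`, iteration ends with a projective module and `M ∈ 𝒳`.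

To find test modules in `𝒳`, first make `N` free on the punctured spectrum: the fiber of `x • 𝟙 N`
lies in `𝒳`, has `Ext` killed by `x`, and by Nakayama has the same projective dimension as `N`. If
then `pd N = i`, a map from a test module `Z` to `N` that is nonzero on `Ext^i(-, R)` is surjective
on it, so its fiber has no `Ext` in degrees `≥ i` and `Z ∈ 𝒳` by the first step and induction on
`i`, applied to the syzygy of `N`.
-/

open Abelian

section ExtAnnihilator

universe w

variable (R : Type*) [CommRing R] {C : Type*} [Category C] [Abelian C] [Linear R C] [HasExt.{w} C]

/-- The ideal of scalars killing `Ext X Y i` for all `Y` and all `i > 0`. It measures how far `X`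
is from being projective: it is the unit ideal when `X` is projective. -/
noncomputable def extAnnihilator (X : C) : Ideal R :=
  ⨅ (Y : C) (i : ℕ), Module.annihilator R (Ext X Y (i + 1))

variable {R}

lemma mem_extAnnihilator_iff {X : C} {r : R} :
    r ∈ extAnnihilator R X ↔ ∀ (Y : C) (i : ℕ) (e : Ext X Y (i + 1)), r • e = 0 := by
  simp only [extAnnihilator, Submodule.mem_iInf, Module.mem_annihilator]

lemma mk₀_smul_id_comp {X Y : C} {n : ℕ} (r : R) (e : Ext X Y n) :
    (Ext.mk₀ (r • 𝟙 X)).comp e (zero_add n) = r • e := by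
  rw [Ext.mk₀_smul, Ext.smul_comp, Ext.mk₀_id_comp]

lemma mem_extAnnihilator_of_comp_eq_smul_id {X P : C} [Projective P] {f : X ⟶ P} {g : P ⟶ X}
    {r : R} (h : f ≫ g = r • 𝟙 X) : r ∈ extAnnihilator R X := by
  refine mem_extAnnihilator_iff.2 fun Y i e ↦ ?_
  rw [← mk₀_smul_id_comp, ← h, ← Ext.mk₀_comp_mk₀_assoc,
    ((Ext.mk₀ g).comp e (zero_add _)).eq_zero_of_projective, Ext.comp_zero]

variable (R) in
lemma extAnnihilator_eq_top_of_projective (P : C) [Projective P] : extAnnihilator R P = ⊤ :=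
  (Ideal.eq_top_iff_one _).2 <|
    mem_extAnnihilator_of_comp_eq_smul_id (f := 𝟙 P) (g := 𝟙 P) (by simp)

variable {S : ShortComplex C} (hS : S.ShortExact)
include hS

lemma extAnnihilator_mul_le_X₁ :
    extAnnihilator R S.X₂ * extAnnihilator R S.X₃ ≤ extAnnihilator R S.X₁ := by
  refine Ideal.mul_le.2 fun r hr s hs ↦ mem_extAnnihilator_iff.2 fun Y i e ↦ ?_
  rw [mem_extAnnihilator_iff] at hr hs
  obtain ⟨e', he'⟩ := Ext.contravariant_sequence_exact₁ hS Y (s • e) (add_comm 1 (i + 1))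
    (by rw [Ext.comp_smul, hs])
  rw [mul_smul, ← he', ← Ext.comp_smul, hr, Ext.comp_zero]

lemma extAnnihilator_X₃_le_X₁ [Projective S.X₂] :
    extAnnihilator R S.X₃ ≤ extAnnihilator R S.X₁ := by
  have h := extAnnihilator_mul_le_X₁ (R := R) hS
  rwa [extAnnihilator_eq_top_of_projective, Ideal.top_mul] at h

lemma extAnnihilator_mul_le_X₂ :
    extAnnihilator R S.X₁ * extAnnihilator R S.X₃ ≤ extAnnihilator R S.X₂ := by
  refine Ideal.mul_le.2 fun r hr s hs ↦ mem_extAnnihilator_iff.2 fun Y i e ↦ ?_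
  rw [mem_extAnnihilator_iff] at hr hs
  obtain ⟨e', he'⟩ := Ext.contravariant_sequence_exact₂ hS Y (r • e) (by rw [Ext.comp_smul, hr])
  rw [mul_comm, mul_smul, ← he', ← Ext.comp_smul, hs, Ext.comp_zero]

lemma mem_extAnnihilator_X₃_of_f_comp_eq_smul_id [Projective S.X₂] {h : S.X₂ ⟶ S.X₁} {r : R}
    (hr : S.f ≫ h = r • 𝟙 S.X₁) : r ∈ extAnnihilator R S.X₃ := by
  refine mem_extAnnihilator_iff.2 fun Y i e ↦ ?_
  obtain ⟨e', rfl⟩ := Ext.contravariant_sequence_exact₃ hS Y e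
    (Ext.eq_zero_of_projective _) (add_comm 1 i)
  rw [← Ext.comp_smul, ← mk₀_smul_id_comp, ← hr, ← Ext.mk₀_comp_mk₀_assoc, hS.extClass_comp_assoc]

lemma exists_comp_g_eq_smul_id {r : R} (hr : r ∈ extAnnihilator R S.X₃) :
    ∃ φ : S.X₃ ⟶ S.X₂, φ ≫ S.g = r • 𝟙 S.X₃ := by
  obtain ⟨e, he⟩ := Ext.covariant_sequence_exact₃ S.X₃ hS (Ext.mk₀ (r • 𝟙 S.X₃)) (zero_add 1)
    (by rw [mk₀_smul_id_comp, mem_extAnnihilator_iff.1 hr])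
  obtain ⟨φ, rfl⟩ := (Ext.mk₀_bijective _ _).2 e
  exact ⟨φ, (Ext.mk₀_bijective _ _).1 (by rw [← he, Ext.mk₀_comp_mk₀])⟩

end ExtAnnihilator

section DimensionShift

universe w

variable (R : Type*) [CommRing R] {C : Type*} [Category C] [Abelian C] [Linear R C] [HasExt.{w} C]
  {S : ShortComplex C} (hS : S.ShortExact) [Projective S.X₂]

/-- Dimension shifting: the connecting map of a short exact sequence with projective middle term,
in positive degrees. -/
noncomputable def dimensionShift (Y : C) (n : ℕ) : Ext S.X₁ Y (n + 1) ≃ₗ[R] Ext S.X₃ Y (n + 2) :=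
  LinearEquiv.ofBijective (hS.extClass.precompOfLinear R Y (add_comm 1 (n + 1))) <| by
    refine ⟨(injective_iff_map_eq_zero _).2 fun e he ↦ ?_, fun e ↦
      Ext.contravariant_sequence_exact₃ hS Y e (Ext.eq_zero_of_projective _) (add_comm 1 (n + 1))⟩
    obtain ⟨e', rfl⟩ := Ext.contravariant_sequence_exact₁ hS Y e (add_comm 1 (n + 1)) he
    rw [e'.eq_zero_of_projective, Ext.comp_zero]

end DimensionShift

section DualExt

open IsLocalRing

variable {R}

/-- The module `Ext^i(M, R)`. -/
abbrev DualExt (M : ModuleCat.{u} R) (i : ℕ) : Type u := Ext M (ModuleCat.of R R) i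

lemma subsingleton_ext_of_subsingleton_dualExt {M : ModuleCat.{u} R} {i : ℕ}
    [Subsingleton (DualExt M i)] (P : ModuleCat.{u} R) [Module.Finite R P] [Projective P] :
    Subsingleton (Ext M P i) := by
  refine subsingleton_of_forall_eq 0 fun e ↦ ?_
  obtain ⟨n, f, g, -, -, hfg⟩ := Module.Finite.exists_comp_eq_id_of_projective R P
  have dual_basis : 𝟙 P = ∑ j, (ModuleCat.ofHom (LinearMap.proj j ∘ₗ g) : P ⟶ .of R R) ≫
      ModuleCat.ofHom (f ∘ₗ LinearMap.single R (fun _ ↦ R) j) := by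
    ext x
    simpa [← ModuleCat.ofHom_comp, ← map_sum, Finset.univ_sum_single]
      using (LinearMap.congr_fun hfg x).symm
  rw [← Ext.comp_mk₀_id e, dual_basis, Ext.mk₀_sum, Ext.comp_sum]
  refine Finset.sum_eq_zero fun j _ ↦ ?_
  rw [← Ext.mk₀_comp_mk₀, ← Ext.comp_assoc_of_third_deg_zero,
    Subsingleton.elim (e.comp _ _) 0, Ext.zero_comp]

lemma comp_mk₀_toSpanSingleton_eq_zero {M X : ModuleCat.{u} R} {i : ℕ} {I : Ideal R}
    {e : DualExt M i} (he : ∀ r ∈ I, r • e = 0) {x : X} (hx : x ∈ I • (⊤ : Submodule R X)) :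
    e.comp (Ext.mk₀ (ModuleCat.ofHom (LinearMap.toSpanSingleton R X x))) (add_zero i) = 0 := by
  refine Submodule.smul_induction_on hx (fun r hr y _ ↦ ?_) (fun y z hy hz ↦ ?_)
  · have : ModuleCat.ofHom (LinearMap.toSpanSingleton R X (r • y)) =
        r • ModuleCat.ofHom (LinearMap.toSpanSingleton R X y) := by
      ext; simp
    rw [this, Ext.mk₀_smul, Ext.comp_smul, ← Ext.smul_comp, he r hr,
      Ext.zero_comp]
  · rw [LinearMap.toSpanSingleton_add, ModuleCat.ofHom_add, Ext.mk₀_add, Ext.comp_add, hy, hz,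
      add_zero]

variable [IsNoetherianRing R]

lemma hasProjectiveDimensionLE_of_subsingleton_dualExt_succ (M : ModuleCat.{u} R)
    [Module.Finite R M] {n : ℕ} [hpd : HasProjectiveDimensionLE M (n + 1)]
    (h : Subsingleton (DualExt M (n + 1))) : HasProjectiveDimensionLE M n := by
  induction n generalizing M with
  | zero =>
    obtain ⟨c, g, hg⟩ := Module.Finite.exists_fin' R M
    have hS := LinearMap.shortExact_shortComplexKer hg
    have : Projective g.shortComplexKer.X₁ := projective_iff_hasProjectiveDimensionLT_one.2 <|
      (hS.hasProjectiveDimensionLT_X₃_iff 0 inferInstance).1 hpd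
    have := subsingleton_ext_of_subsingleton_dualExt (M := M) (i := 1) g.shortComplexKer.X₁
    refine (projective_iff_hasProjectiveDimensionLT_one (X := M)).1 <|
      projective_iff_subsingleton_ext_one.2 fun Y ↦ subsingleton_of_forall_eq 0 fun e ↦ ?_
    obtain ⟨e', rfl⟩ := Ext.contravariant_sequence_exact₃ hS Y e
      (Ext.eq_zero_of_projective _) (add_comm 1 0)
    have splits : hS.extClass = 0 := Subsingleton.elim (α := Ext M g.shortComplexKer.X₁ 1) _ _
    rw [splits, Ext.zero_comp]
  | succ n ih =>
    obtain ⟨c, g, hg⟩ := Module.Finite.exists_fin' R M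
    have hS := LinearMap.shortExact_shortComplexKer hg
    have hker := (hS.hasProjectiveDimensionLT_X₃_iff (n + 1) inferInstance).1 hpd
    exact (hS.hasProjectiveDimensionLT_X₃_iff n inferInstance).2 <|
      ih (.of R g.ker) (hpd := hker) (dimensionShift R hS (.of R R) n).subsingleton

lemma hasProjectiveDimensionLE_of_forall_subsingleton_dualExt (M : ModuleCat.{u} R)
    [Module.Finite R M] (hM : ∃ d, HasProjectiveDimensionLE M d) {n : ℕ}
    (h : ∀ i, n < i → Subsingleton (DualExt M i)) : HasProjectiveDimensionLE M n := by
  obtain ⟨d, hd⟩ := hM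
  suffices ∀ k, HasProjectiveDimensionLE M (n + k) → HasProjectiveDimensionLE M n from
    this d (hasProjectiveDimensionLT_of_ge M (d + 1) _ (by lia))
  intro k
  induction k with
  | zero => exact id
  | succ k ih =>
    exact fun _ ↦ ih (hasProjectiveDimensionLE_of_subsingleton_dualExt_succ M (h _ (by lia)))

end DualExt

section MinimalRelation

open IsLocalRing TensorProduct

variable {R} [IsLocalRing R]
  {K F : Type*} [AddCommGroup K] [Module R K] [AddCommGroup F] [Module R F]

lemma one_tmul_residueField_eq_zero_iff {x : F} :
    (1 : ResidueField R) ⊗ₜ[R] x = 0 ↔ x ∈ maximalIdeal R • (⊤ : Submodule R F) := by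
  rw [← Submodule.Quotient.mk_eq_zero, ← quotTensorEquivQuotSMul_mk_one_tmul]
  exact (quotTensorEquivQuotSMul F (maximalIdeal R)).map_eq_zero_iff.symm

variable [Module.Free R K] [Module.Finite R K]

lemma exists_dual_apply_eq_one {x : K} (hx : x ∉ maximalIdeal R • (⊤ : Submodule R K)) :
    ∃ p : K →ₗ[R] R, p x = 1 := by
  let b := Module.finBasis R K
  obtain ⟨i, hi⟩ : ∃ i, IsUnit (b.repr x i) := by
    by_contra! h
    rw [← b.sum_repr x] at hx
    exact hx (sum_mem fun i _ ↦ Submodule.smul_mem_smul (h i) trivial)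
  obtain ⟨r, hr⟩ := hi.exists_left_inv
  exact ⟨r • b.coord i, by simpa using hr⟩

lemma exists_dual_apply_eq_one_and_apply_mem_smul_top [Module.Free R F] [Module.Finite R F]
    {f : K →ₗ[R] F} (hf : ¬ ∃ l, l ∘ₗ f = LinearMap.id) :
    ∃ (x : K) (p : K →ₗ[R] R), p x = 1 ∧ f x ∈ maximalIdeal R • (⊤ : Submodule R F) := by
  rw [split_injective_iff_lTensor_residueField_injective, injective_iff_map_eq_zero] at hf
  push Not at hf
  obtain ⟨y, hy, hy0⟩ := hf
  obtain ⟨x, rfl⟩ := TensorProduct.mk_surjective R K (ResidueField R) residue_surjective y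
  simp only [TensorProduct.mk_apply, LinearMap.lTensor_tmul, ne_eq,
    one_tmul_residueField_eq_zero_iff] at hy hy0
  obtain ⟨p, hp⟩ := exists_dual_apply_eq_one hy0
  exact ⟨x, p, hp, hy⟩

lemma exists_minimal_relation [IsNoetherianRing R] {W : ModuleCat.{u} R} [Module.Finite R W]
    [hpd : HasProjectiveDimensionLE W 1] (hW : ¬ Projective W) :
    ∃ (c : ℕ) (g : (Fin c → R) →ₗ[R] W), Function.Surjective g ∧
      ∃ (x : g.ker) (p : g.ker →ₗ[R] R), p x = 1 ∧
        (x : Fin c → R) ∈ maximalIdeal R • (⊤ : Submodule R (Fin c → R)) := by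
  obtain ⟨c, g, hg⟩ := Module.Finite.exists_fin' R W
  have hS := LinearMap.shortExact_shortComplexKer hg
  have : HasProjectiveDimensionLT (ModuleCat.of R g.ker) 1 :=
    (hS.hasProjectiveDimensionLT_X₃_iff 0 inferInstance).1 hpd
  have : Module.Projective R g.ker := (IsProjective.iff_projective _).2 inferInstance
  have : Module.Free R g.ker := Module.free_of_flat_of_isLocalRing
  refine ⟨c, g, hg, exists_dual_apply_eq_one_and_apply_mem_smul_top (f := g.ker.subtype) ?_⟩
  rintro ⟨l, hl⟩
  let splitting := ShortComplex.Splitting.ofExactOfRetraction g.shortComplexKer hS.exact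
    (ModuleCat.ofHom l) (ModuleCat.hom_ext hl) hS.epi_g
  exact hW (Retract.projective ⟨splitting.s, _, splitting.s_g⟩)

end MinimalRelation

section SocleUniversal

open IsLocalRing

variable {R}

lemma exists_comp_extClass_eq {S : ShortComplex (ModuleCat.{u} R)} (hS : S.ShortExact)
    [Module.Finite R S.X₂] [Projective S.X₂] {M : ModuleCat.{u} R} {a : ℕ}
    [Subsingleton (DualExt M (a + 1))] (e : Ext M S.X₁ (a + 1)) :
    ∃ f : Ext M S.X₃ a, f.comp hS.extClass rfl = e :=
  have := subsingleton_ext_of_subsingleton_dualExt (M := M) (i := a + 1) S.X₂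
  Ext.covariant_sequence_exact₁ M hS e (Subsingleton.elim _ _) rfl

lemma comp_toSpanSingleton_comp_eq {M K : ModuleCat.{u} R} {i : ℕ} (ξ : DualExt M i) {x : K}
    {p : K →ₗ[R] R} (hp : p x = 1) :
    (ξ.comp (Ext.mk₀ (ModuleCat.ofHom (LinearMap.toSpanSingleton R K x))) (add_zero i)).comp
      (Ext.mk₀ (ModuleCat.ofHom p)) (add_zero i) = ξ := by
  have : ModuleCat.ofHom (LinearMap.toSpanSingleton R K x) ≫ ModuleCat.ofHom p = 𝟙 _ := by
    ext; simpa using hp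
  rw [Ext.comp_assoc_of_third_deg_zero, Ext.mk₀_comp_mk₀, this, Ext.comp_mk₀_id]

variable [IsLocalRing R]

/-- A class `τ ∈ Ext^n(Y, R)` through which every element of `Ext^(a+n)(M, R)` killed by the
maximal ideal factors, as soon as `Ext^i(M, R) = 0` for `a < i < a + n`. -/
def IsSocleUniversal {Y : ModuleCat.{u} R} {n : ℕ} (τ : DualExt Y n) : Prop :=
  ∀ ⦃M : ModuleCat.{u} R⦄ ⦃a b : ℕ⦄ (hab : a + n = b) (ξ : DualExt M b),
    (∀ r ∈ maximalIdeal R, r • ξ = 0) →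
    (∀ i, a < i → i < b → Subsingleton (DualExt M i)) → ∃ f : Ext M Y a, f.comp τ hab = ξ

lemma comp_toSpanSingleton_comp_subtype_eq_zero {M : ModuleCat.{u} R} {c i : ℕ}
    {K : Submodule R (Fin c → R)} {x : K}
    (hx : (x : Fin c → R) ∈ maximalIdeal R • (⊤ : Submodule R (Fin c → R)))
    {ξ : DualExt M i} (hξ : ∀ r ∈ maximalIdeal R, r • ξ = 0) :
    (ξ.comp (Ext.mk₀ (ModuleCat.ofHom (LinearMap.toSpanSingleton R K x))) (add_zero i)).comp
      (Ext.mk₀ (ModuleCat.ofHom K.subtype)) (add_zero i) = 0 := by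
  rw [Ext.comp_assoc_of_third_deg_zero, Ext.mk₀_comp_mk₀, ← ModuleCat.ofHom_comp,
    LinearMap.comp_toSpanSingleton]
  exact comp_mk₀_toSpanSingleton_eq_zero (X := .of R (Fin c → R)) hξ hx

lemma smul_ext_residueMod_eq_zero {V : ModuleCat.{u} R} {i : ℕ} (e : Ext (residueMod R) V i)
    {r : R} (hr : r ∈ maximalIdeal R) : r • e = 0 := by
  have : r • 𝟙 (residueMod R) = 0 := by
    ext y
    change r • y = 0
    rw [Algebra.smul_def, ResidueField.algebraMap_eq, (residue_eq_zero_iff r).2 hr, zero_mul]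
  rw [← mk₀_smul_id_comp, this, Ext.mk₀_zero, Ext.zero_comp]

variable [IsNoetherianRing R]

theorem exists_isSocleUniversal {Y : ModuleCat.{u} R} [Module.Finite R Y] {n : ℕ}
    (hpd : HasProjectiveDimensionLE Y (n + 1)) (hY : ¬ HasProjectiveDimensionLE Y n) :
    ∃ τ : DualExt Y (n + 1), IsSocleUniversal τ := by
  induction n generalizing Y with
  | zero =>
    obtain ⟨c, g, hg, x, p, hp, hx⟩ := exists_minimal_relation
      (mt (projective_iff_hasProjectiveDimensionLE_zero _).1 hY)
    have hS := LinearMap.shortExact_shortComplexKer hg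
    refine ⟨hS.extClass.comp (Ext.mk₀ (ModuleCat.ofHom p)) (add_zero 1), ?_⟩
    rintro M a _ rfl ξ hξ -
    obtain ⟨f, hf⟩ := Ext.covariant_sequence_exact₁ M hS _
      (comp_toSpanSingleton_comp_subtype_eq_zero hx hξ) rfl
    refine ⟨f, ?_⟩
    rw [← Ext.comp_assoc_of_third_deg_zero, hf,
      comp_toSpanSingleton_comp_eq (K := .of R g.ker) ξ hp]
  | succ n ih =>
    obtain ⟨c, g, hg⟩ := Module.Finite.exists_fin' R Y
    have hS := LinearMap.shortExact_shortComplexKer hg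
    obtain ⟨τ, hτ⟩ := ih (Y := .of R g.ker)
      ((hS.hasProjectiveDimensionLT_X₃_iff (n + 1) inferInstance).1 hpd)
      (mt (hS.hasProjectiveDimensionLT_X₃_iff n inferInstance).2 hY)
    refine ⟨hS.extClass.comp τ (add_comm 1 (n + 1)), ?_⟩
    intro M a b hab ξ hξ hM
    obtain ⟨f, rfl⟩ := hτ (by lia : (a + 1) + (n + 1) = b) ξ hξ
      fun i hi hi' ↦ hM i (by lia) hi'
    have := hM (a + 1) (by lia) (by lia)
    obtain ⟨f, rfl⟩ := exists_comp_extClass_eq hS f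
    exact ⟨f, (Ext.comp_assoc _ _ _ _ _ (by lia)).symm⟩

theorem subsingleton_dualExt_residueMod {Y : ModuleCat.{u} R} [Module.Finite R Y] {n : ℕ}
    (hpd : HasProjectiveDimensionLE Y (n + 1)) (hY : ¬ HasProjectiveDimensionLE Y n) :
    ∀ t ≤ n, Subsingleton (DualExt (residueMod R) t) := by
  induction n generalizing Y with
  | zero =>
    rintro t ht
    obtain rfl : t = 0 := by lia
    obtain ⟨c, g, hg, x, p, hp, hx⟩ := exists_minimal_relation
      (mt (projective_iff_hasProjectiveDimensionLE_zero _).1 hY)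
    have := (LinearMap.shortExact_shortComplexKer hg).mono_f
    refine subsingleton_of_forall_eq 0 fun ξ ↦ ?_
    have factors_through_kernel := Ext.postcomp_mk₀_injective_of_mono (residueMod R)
      g.shortComplexKer.f <| (comp_toSpanSingleton_comp_subtype_eq_zero hx
        fun _ ↦ smul_ext_residueMod_eq_zero ξ).trans (map_zero _).symm
    rw [← comp_toSpanSingleton_comp_eq (K := .of R g.ker) ξ hp]
    exact (congrArg (Ext.comp · _ _) factors_through_kernel).trans (Ext.zero_comp ..)
  | succ n ih =>
    obtain ⟨c, g, hg⟩ := Module.Finite.exists_fin' R Y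
    have hS := LinearMap.shortExact_shortComplexKer hg
    have hK := (hS.hasProjectiveDimensionLT_X₃_iff (n + 1) inferInstance).1 hpd
    have hK' := mt (hS.hasProjectiveDimensionLT_X₃_iff n inferInstance).2 hY
    have lower := ih (Y := .of R g.ker) hK hK'
    intro t ht
    obtain ht | rfl := Nat.le_succ_iff.1 ht
    · exact lower t ht
    obtain ⟨τ, hτ⟩ := exists_isSocleUniversal (Y := .of R g.ker) hK hK'
    refine subsingleton_of_forall_eq 0 fun ξ ↦ ?_
    obtain ⟨f, rfl⟩ := hτ (zero_add _) ξ (fun _ ↦ smul_ext_residueMod_eq_zero ξ)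
      fun i _ hi ↦ lower i (by lia)
    have := lower 0 (by lia)
    have := subsingleton_ext_of_subsingleton_dualExt (M := residueMod R) (i := 0)
      g.shortComplexKer.X₂
    have := hS.mono_f
    have hf : f = 0 := Ext.postcomp_mk₀_injective_of_mono (residueMod R) g.shortComplexKer.f
      (Subsingleton.elim _ _)
    rw [hf, Ext.zero_comp]

end SocleUniversal

section Socle

variable {R : Type*} [CommRing R] {E : Type*} [AddCommGroup E] [Module R E]

lemma exists_ne_zero_forall_smul_eq_zero_of_le_radical [Nontrivial E] {I : Ideal R} (hI : I.FG)
    (h : I ≤ (Module.annihilator R E).radical) : ∃ y : E, y ≠ 0 ∧ ∀ r ∈ I, r • y = 0 := by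
  obtain ⟨n, hn⟩ := Ideal.exists_pow_le_of_le_radical_of_fg h hI
  by_contra! socle_eq_bot
  suffices ∀ k, ∀ y : E, (∀ r ∈ I ^ k, r • y = 0) → y = 0 by
    obtain ⟨y, hy⟩ := exists_ne (0 : E)
    exact hy (this n y fun r hr ↦ Module.mem_annihilator.1 (hn hr) y)
  intro k
  induction k with
  | zero => exact fun y hy ↦ by simpa using hy 1 (by simp)
  | succ k ih =>
    refine fun y hy ↦ ih y fun r hr ↦ by_contra fun hry ↦ ?_
    obtain ⟨s, hs, hsy⟩ := socle_eq_bot _ hry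
    exact hsy (by rw [smul_smul, hy _ (by rw [pow_succ']; exact Ideal.mul_mem_mul hs hr)])

end Socle

section PuncturedFree

open IsLocalRing

lemma exists_comp_eq_smul_id_of_comp_map_eq_id {R M M' F F' : Type*} [CommRing R]
    [AddCommGroup M] [Module R M] [AddCommGroup M'] [Module R M'] [AddCommGroup F] [Module R F]
    [AddCommGroup F'] [Module R F'] [Module.FinitePresentation R M] (S : Submonoid R)
    (ιM : M →ₗ[R] M') [IsLocalizedModule S ιM] (ιF : F →ₗ[R] F') [IsLocalizedModule S ιF]
    {g : F →ₗ[R] M} {σ : M' →ₗ[R] F'}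
    (hσ : IsLocalizedModule.map S ιF ιM g ∘ₗ σ = LinearMap.id) :
    ∃ s ∈ S, ∃ h : M →ₗ[R] F, g ∘ₗ h = s • LinearMap.id := by
  obtain ⟨h, s, hs⟩ := Module.FinitePresentation.exists_lift_of_isLocalizedModule S ιF (σ ∘ₗ ιM)
  obtain ⟨t, ht⟩ : ∃ t : S, t • (g ∘ₗ h) = t • (s • LinearMap.id) := by
    refine Module.Finite.exists_smul_of_comp_eq_of_isLocalizedModule S ιM _ _ ?_
    calc ιM ∘ₗ g ∘ₗ h = IsLocalizedModule.map S ιF ιM g ∘ₗ ιF ∘ₗ h := by ext x; simp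
      _ = s • (IsLocalizedModule.map S ιF ιM g ∘ₗ σ) ∘ₗ ιM := by
        rw [hs]; ext x; simp [Submonoid.smul_def]
      _ = ιM ∘ₗ (s • LinearMap.id) := by rw [hσ]; ext x; simp [Submonoid.smul_def]
  exact ⟨t * s, (t * s).2, t • h, by
    rw [← smul_smul]; exact (LinearMap.comp_smul g (t : R) h).trans ht⟩

variable {R}

lemma exists_mem_extAnnihilator_of_projective_localizedModule (M : ModuleCat.{u} R)
    [Module.FinitePresentation R M] (S : Submonoid R)
    [Module.Projective (Localization S) (LocalizedModule S M)] :
    ∃ s ∈ S, s ∈ extAnnihilator R M := by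
  obtain ⟨c, g, hg⟩ := Module.Finite.exists_fin' R M
  obtain ⟨σ, hσ⟩ := Module.projective_lifting_property (LocalizedModule.map S g) LinearMap.id
    (LocalizedModule.map_surjective S g hg)
  obtain ⟨s, hs, h, hgh⟩ := exists_comp_eq_smul_id_of_comp_map_eq_id S
    (LocalizedModule.mkLinearMap S M) (LocalizedModule.mkLinearMap S (Fin c → R)) (g := g)
    (σ := σ.restrictScalars R) (by ext x; exact LinearMap.congr_fun hσ x)
  exact ⟨s, hs, mem_extAnnihilator_of_comp_eq_smul_id (f := ModuleCat.ofHom h)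
    (g := ModuleCat.ofHom g) (by ext x; exact LinearMap.congr_fun hgh x)⟩

variable [IsLocalRing R]

/-- A finite module of finite projective dimension over a local ring whose positive `Ext` groups
are all killed by a power of the maximal ideal. Over a noetherian ring this says that `M` is locally
free on the punctured spectrum; the annihilator form is the one that passes through short exact
sequences. -/
structure IsPuncturedFree (M : ModuleCat.{u} R) : Prop where
  finite : Module.Finite R M
  exists_hasProjectiveDimensionLE : ∃ d, HasProjectiveDimensionLE M d
  le_radical : maximalIdeal R ≤ (extAnnihilator R M).radical

lemma isPuncturedFree_of_projective (P : ModuleCat.{u} R) [Module.Finite R P] [Projective P] :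
    IsPuncturedFree P where
  finite := inferInstance
  exists_hasProjectiveDimensionLE := ⟨0, (projective_iff_hasProjectiveDimensionLE_zero _).1 ‹_›⟩
  le_radical := by rw [extAnnihilator_eq_top_of_projective, Ideal.radical_top]; exact le_top

lemma IsPuncturedFree.X₂ {S : ShortComplex (ModuleCat.{u} R)} (hS : S.ShortExact)
    (h₁ : IsPuncturedFree S.X₁) (h₃ : IsPuncturedFree S.X₃) : IsPuncturedFree S.X₂ where
  finite :=
    have := h₁.finite
    have := h₃.finite
    .of_exact (f := S.f.hom) (g := S.g.hom)
      ((ShortComplex.ShortExact.moduleCat_exact_iff_function_exact S).1 hS.exact)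
      hS.moduleCat_surjective_g
  exists_hasProjectiveDimensionLE := by
    obtain ⟨a, ha⟩ := h₁.exists_hasProjectiveDimensionLE
    obtain ⟨b, hb⟩ := h₃.exists_hasProjectiveDimensionLE
    exact ⟨a + b, hS.hasProjectiveDimensionLT_X₂ _
      (hasProjectiveDimensionLT_of_ge S.X₁ (a + 1) _ (by lia))
      (hasProjectiveDimensionLT_of_ge S.X₃ (b + 1) _ (by lia))⟩
  le_radical := ((le_inf h₁.le_radical h₃.le_radical).trans_eq (Ideal.radical_mul _ _).symm).trans
    (Ideal.radical_mono (extAnnihilator_mul_le_X₂ hS))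

variable [IsNoetherianRing R]

lemma IsPuncturedFree.X₁ {S : ShortComplex (ModuleCat.{u} R)} (hS : S.ShortExact)
    (h₂ : IsPuncturedFree S.X₂) (h₃ : IsPuncturedFree S.X₃) : IsPuncturedFree S.X₁ where
  finite :=
    have := h₂.finite
    Module.Finite.of_injective S.f.hom hS.moduleCat_injective_f
  exists_hasProjectiveDimensionLE := by
    obtain ⟨a, ha⟩ := h₂.exists_hasProjectiveDimensionLE
    obtain ⟨b, hb⟩ := h₃.exists_hasProjectiveDimensionLE
    exact ⟨a + b, hS.hasProjectiveDimensionLT_X₁ _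
      (hasProjectiveDimensionLT_of_ge S.X₂ (a + 1) _ (by lia))
      (hasProjectiveDimensionLT_of_ge S.X₃ (b + 1) _ (by lia))⟩
  le_radical := ((le_inf h₂.le_radical h₃.le_radical).trans_eq (Ideal.radical_mul _ _).symm).trans
    (Ideal.radical_mono (extAnnihilator_mul_le_X₁ hS))

theorem isPuncturedFree_of_forall_projective_localizedModule {M : ModuleCat.{u} R}
    [Module.Finite R M] (hM : ∃ d, HasProjectiveDimensionLE M d)
    (h : ∀ p : PrimeSpectrum R, p.asIdeal ≠ maximalIdeal R →
      Module.Projective (Localization.AtPrime p.asIdeal)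
        (LocalizedModule p.asIdeal.primeCompl M)) :
    IsPuncturedFree M where
  finite := inferInstance
  exists_hasProjectiveDimensionLE := hM
  le_radical := by
    rw [Ideal.radical_eq_sInf]
    refine le_sInf fun p ⟨hle, hp⟩ ↦ by_contra fun hpm ↦ ?_
    have := Module.finitePresentation_of_finite R M
    have := h ⟨p, hp⟩ fun h ↦ hpm h.ge
    obtain ⟨s, hs, hsM⟩ := exists_mem_extAnnihilator_of_projective_localizedModule M p.primeCompl
    exact hs (hle hsM)

end PuncturedFree

section TestModule

open IsLocalRing

lemma subsingleton_ext_X₃ {C : Type*} [Category C] [Abelian C] [HasExt C] {S : ShortComplex C}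
    (hS : S.ShortExact) (A : C) (n : ℕ) [Subsingleton (Ext A S.X₂ n)]
    [Subsingleton (Ext A S.X₁ (n + 1))] : Subsingleton (Ext A S.X₃ n) := by
  refine subsingleton_of_forall_eq 0 fun e ↦ ?_
  obtain ⟨e', rfl⟩ := Ext.covariant_sequence_exact₃ A hS e rfl (Subsingleton.elim _ _)
  rw [Subsingleton.elim e' 0, Ext.zero_comp]

variable {R}

lemma shortExact_mkQ_range {A B : Type u} [AddCommGroup A] [Module R A] [AddCommGroup B]
    [Module R B] {f : A →ₗ[R] B} (hf : Function.Injective f) :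
    (ModuleCat.shortComplexOfCompEqZero f f.range.mkQ f.range_mkQ_comp).ShortExact :=
  ModuleCat.shortComplex_shortExact _ f.exact_map_mkQ_range hf f.range.mkQ_surjective

section LeftApproximation

lemma exists_surjective_lcomp [IsNoetherianRing R] (Z : Type*) [AddCommGroup Z] [Module R Z]
    [Module.Finite R Z] :
    ∃ (c : ℕ) (f : Z →ₗ[R] (Fin c → R)), Function.Surjective (LinearMap.lcomp R R f) := by
  obtain ⟨c, s, hs⟩ := Module.Finite.exists_fin (R := R) (M := Z →ₗ[R] R)
  refine ⟨c, LinearMap.pi s, fun φ ↦ ?_⟩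
  obtain ⟨a, rfl⟩ := (Submodule.mem_span_range_iff_exists_fun R).1 (hs ▸ Submodule.mem_top (x := φ))
  exact ⟨∑ i, a i • LinearMap.proj i, by ext; simp⟩

variable {Z : ModuleCat.{u} R} [Module.Finite R Z] {F : Type*} [AddCommGroup F] [Module R F]
  {f : Z →ₗ[R] F} (hf : Function.Surjective (LinearMap.lcomp R R f))
include hf

lemma exists_comp_eq_smul_id_of_mem_extAnnihilator {r : R} (hr : r ∈ extAnnihilator R Z) :
    ∃ h : F →ₗ[R] Z, h ∘ₗ f = r • LinearMap.id := by
  obtain ⟨d, g, hg⟩ := Module.Finite.exists_fin' R Z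
  obtain ⟨φ, hφ⟩ := exists_comp_g_eq_smul_id (LinearMap.shortExact_shortComplexKer hg) hr
  choose ψ hψ using fun i ↦ hf (LinearMap.proj i ∘ₗ φ.hom)
  have extends_φ : LinearMap.pi ψ ∘ₗ f = φ.hom := by
    ext z i
    exact LinearMap.congr_fun (hψ i) z
  exact ⟨g ∘ₗ LinearMap.pi ψ, by
    rw [LinearMap.comp_assoc, extends_φ]; exact congrArg ModuleCat.Hom.hom hφ⟩

lemma injective_of_surjective_lcomp [IsLocalRing R] [IsNoetherianRing R]
    (hZ : maximalIdeal R ≤ (extAnnihilator R Z).radical)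
    (hsocle : ∀ z : Z, (∀ r ∈ maximalIdeal R, r • z = 0) → z = 0) : Function.Injective f := by
  rw [← LinearMap.ker_eq_bot]
  by_contra h
  have := Submodule.nontrivial_iff_ne_bot.2 h
  have : extAnnihilator R Z ≤ Module.annihilator R f.ker := by
    refine fun r hr ↦ Module.mem_annihilator.2 fun ⟨z, hz⟩ ↦ Subtype.ext ?_
    obtain ⟨h, hh⟩ := exists_comp_eq_smul_id_of_mem_extAnnihilator hf hr
    calc r • z = h (f z) := (LinearMap.congr_fun hh z).symm
      _ = 0 := by rw [hz, map_zero]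
  obtain ⟨z, hz0, hz⟩ := exists_ne_zero_forall_smul_eq_zero_of_le_radical
    (IsNoetherian.noetherian _) (hZ.trans (Ideal.radical_mono this))
  exact hz0 (Subtype.ext (hsocle z fun r hr ↦ congrArg Subtype.val (hz r hr)))

end LeftApproximation

lemma subsingleton_dualExt_one_X₃ {S : ShortComplex (ModuleCat.{u} R)} (hS : S.ShortExact)
    [Projective S.X₂] (h : Function.Surjective (LinearMap.lcomp R R S.f.hom)) :
    Subsingleton (DualExt S.X₃ 1) := by
  refine subsingleton_of_forall_eq 0 fun e ↦ ?_
  obtain ⟨e, rfl⟩ := Ext.contravariant_sequence_exact₃ hS _ e (Ext.eq_zero_of_projective _)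
    (add_comm 1 0)
  obtain ⟨φ, rfl⟩ := (Ext.mk₀_bijective _ _).2 e
  obtain ⟨ψ, hψ⟩ := h φ.hom
  obtain rfl : S.f ≫ ModuleCat.ofHom ψ = φ := ModuleCat.hom_ext hψ
  rw [← Ext.mk₀_comp_mk₀, hS.extClass_comp_assoc]

lemma nonempty_dualExt_one_X₃_equiv {F Z : ModuleCat.{u} R} {f : ModuleCat.of R R ⟶ F} {g : F ⟶ Z}
    {w : f ≫ g = 0} (hS : (ShortComplex.mk f g w).ShortExact) [Projective F] :
    Nonempty (DualExt Z 1 ≃ₗ[R] R ⧸ (Module.Dual.eval R F (f.hom 1)).range) := by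
  let q : R →ₗ[R] DualExt Z 1 := LinearMap.toSpanSingleton R _ hS.extClass
  have smul_extClass (r : R) : r • hS.extClass =
      hS.extClass.comp (Ext.mk₀ (r • 𝟙 (ModuleCat.of R R))) (add_zero 1) := by
    rw [Ext.mk₀_smul, Ext.comp_smul, Ext.comp_mk₀_id]
  have hq : Function.Surjective q := fun e ↦ by
    obtain ⟨e, rfl⟩ := Ext.contravariant_sequence_exact₃ hS _ e (Ext.eq_zero_of_projective _)
      (add_comm 1 0)
    obtain ⟨l, rfl⟩ := (Ext.mk₀_bijective _ _).2 e
    refine ⟨l.hom (1 : R), (smul_extClass _).trans ?_⟩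
    congr 2
    ext
    simp
  have ker_q : q.ker = (Module.Dual.eval R F (f.hom 1)).range := by
    ext r
    rw [LinearMap.mem_ker, LinearMap.toSpanSingleton_apply, smul_extClass]
    constructor
    · intro h
      obtain ⟨e, he⟩ := Ext.contravariant_sequence_exact₁ hS _ _ (add_comm 1 0) h
      obtain ⟨l, rfl⟩ := (Ext.mk₀_bijective _ _).2 e
      rw [Ext.mk₀_comp_mk₀] at he
      have := congrArg (fun t ↦ t.hom (1 : R)) ((Ext.mk₀_bijective _ _).1 he)
      exact ⟨l.hom, by simpa using this⟩
    · rintro ⟨l, rfl⟩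
      have : Module.Dual.eval R F (f.hom 1) l • 𝟙 (ModuleCat.of R R) = f ≫ ModuleCat.ofHom l := by
        ext; simp
      rw [this, ← Ext.mk₀_comp_mk₀, hS.extClass_comp_assoc]
  exact ⟨((Submodule.quotEquivOfEq _ _ ker_q.symm).trans (q.quotKerEquivOfSurjective hq)).symm⟩

variable [IsLocalRing R]

lemma eq_zero_of_forall_smul_eq_zero {Z : ModuleCat.{u} R} [Subsingleton (Ext (residueMod R) Z 0)]
    (z : Z) (hz : ∀ r ∈ maximalIdeal R, r • z = 0) : z = 0 := by
  let φ : residueMod R ⟶ Z := ModuleCat.ofHom (X := ResidueField R)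
    ((maximalIdeal R).liftQ (LinearMap.toSpanSingleton R Z z) hz)
  have hφ : φ = 0 := (Ext.mk₀_bijective _ _).1 (Subsingleton.elim _ _)
  calc z = (1 : R) • z := (one_smul R z).symm
    _ = φ.hom (residue R 1) := rfl
    _ = 0 := by rw [hφ]; rfl

/-- A module whose only nonzero positive `Ext` group into the ring is `Ext^j`, which is the residue
field. For `j` at most the depth of the ring such modules are the last syzygies in the dual of a
resolution of the residue field; they are the pieces from which every module that is free on the
punctured spectrum is assembled. -/
structure IsTestModule (j : ℕ) (Z : ModuleCat.{u} R) : Prop extends IsPuncturedFree Z where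
  subsingleton_dualExt : ∀ i, i + 1 ≠ j → Subsingleton (DualExt Z (i + 1))
  isSimpleModule_dualExt : IsSimpleModule R (DualExt Z j)

end TestModule

section ExistsTestModule

open IsLocalRing

variable {R} [IsLocalRing R]

lemma isTestModule_one {F Z : ModuleCat.{u} R} {f : ModuleCat.of R R ⟶ F} {g : F ⟶ Z}
    {w : f ≫ g = 0} (hS : (ShortComplex.mk f g w).ShortExact) [Module.Finite R F] [Projective F]
    (hf : (Module.Dual.eval R F (f.hom 1)).range = maximalIdeal R) : IsTestModule 1 Z where
  finite := .of_surjective g.hom hS.moduleCat_surjective_g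
  exists_hasProjectiveDimensionLE :=
    have : Projective (ModuleCat.of R R) := inferInstance
    ⟨1, hS.hasProjectiveDimensionLT_X₃ 1 (projective_iff_hasProjectiveDimensionLT_one.1 this)
      inferInstance⟩
  le_radical := by
    refine le_trans (fun r hr ↦ ?_) Ideal.le_radical
    obtain ⟨h, rfl⟩ := hf ▸ hr
    exact mem_extAnnihilator_X₃_of_f_comp_eq_smul_id hS (h := ModuleCat.ofHom h) (by ext; simp)
  subsingleton_dualExt i hi := by
    obtain ⟨i, rfl⟩ := Nat.exists_eq_succ_of_ne_zero (show i ≠ 0 by lia)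
    have : Subsingleton (DualExt (ModuleCat.of R R) (i + 1)) :=
      subsingleton_of_forall_eq 0 Ext.eq_zero_of_projective
    exact (dimensionShift R hS (.of R R) i).symm.subsingleton
  isSimpleModule_dualExt := by
    obtain ⟨e⟩ := nonempty_dualExt_one_X₃_equiv hS
    exact isSimpleModule_iff_quot_maximal.2
      ⟨maximalIdeal R, maximalIdeal.isMaximal R, ⟨e.trans (Submodule.quotEquivOfEq _ _ hf)⟩⟩

lemma IsTestModule.X₃ {S : ShortComplex (ModuleCat.{u} R)} (hS : S.ShortExact)
    [Module.Finite R S.X₂] [Projective S.X₂] {j : ℕ} (h : IsTestModule (j + 1) S.X₁)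
    (hf : Function.Surjective (LinearMap.lcomp R R S.f.hom)) : IsTestModule (j + 2) S.X₃ where
  finite := .of_surjective S.g.hom hS.moduleCat_surjective_g
  exists_hasProjectiveDimensionLE := by
    obtain ⟨d, hd⟩ := h.exists_hasProjectiveDimensionLE
    exact ⟨d + 1, hS.hasProjectiveDimensionLT_X₃ (d + 1) hd inferInstance⟩
  le_radical := by
    have := h.finite
    refine h.le_radical.trans (Ideal.radical_mono fun r hr ↦ ?_)
    obtain ⟨h, hh⟩ := exists_comp_eq_smul_id_of_mem_extAnnihilator hf hr
    exact mem_extAnnihilator_X₃_of_f_comp_eq_smul_id hS (h := ModuleCat.ofHom h)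
      (ModuleCat.hom_ext hh)
  subsingleton_dualExt
    | 0, _ => subsingleton_dualExt_one_X₃ hS hf
    | i + 1, hi =>
      have := h.subsingleton_dualExt i (by lia)
      (dimensionShift R hS (.of R R) i).symm.subsingleton
  isSimpleModule_dualExt :=
    have := h.isSimpleModule_dualExt
    .congr (dimensionShift R hS (.of R R) j).symm

variable [IsNoetherianRing R]

lemma exists_range_dual_eval_eq_maximalIdeal :
    ∃ (c : ℕ) (s : Fin c → R), (Module.Dual.eval R (Fin c → R) s).range = maximalIdeal R := by
  obtain ⟨c, s, hs⟩ := Submodule.fg_iff_exists_fin_generating_family.1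
    (IsNoetherian.noetherian (maximalIdeal R))
  refine ⟨c, s, le_antisymm ?_ ?_⟩
  · rintro _ ⟨h, rfl⟩
    have mem_m (i : Fin c) : s i ∈ maximalIdeal R := hs ▸ Submodule.subset_span ⟨i, rfl⟩
    rw [Module.Dual.eval_apply, ← Finset.univ_sum_single s, map_sum]
    refine sum_mem fun i _ ↦ ?_
    rw [← mul_one (s i), ← smul_eq_mul, Pi.single_smul, map_smul]
    exact Ideal.mul_mem_right _ _ (mem_m i)
  · rw [← hs, Submodule.span_le]
    rintro _ ⟨i, rfl⟩
    exact ⟨LinearMap.proj i, rfl⟩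

theorem exists_isTestModule {n : ℕ} (hn : ∀ t < n, Subsingleton (DualExt (residueMod R) t))
    {j : ℕ} (hj : j < n) : ∃ Z : ModuleCat.{u} R, IsTestModule (j + 1) Z ∧
      ∀ a, a + (j + 1) < n → Subsingleton (Ext (residueMod R) Z a) := by
  have ext_free (c a : ℕ) (ha : a < n) :
      Subsingleton (Ext (residueMod R) (ModuleCat.of R (Fin c → R)) a) :=
    have := hn a ha
    subsingleton_ext_of_subsingleton_dualExt _
  induction j with
  | zero =>
    obtain ⟨c, s, hs⟩ := exists_range_dual_eval_eq_maximalIdeal (R := R)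
    have hf : Function.Injective (LinearMap.toSpanSingleton R (Fin c → R) s) := by
      have := hn 0 hj
      refine (injective_iff_map_eq_zero _).2 fun r hr ↦
        eq_zero_of_forall_smul_eq_zero (Z := .of R R) r ?_
      rw [← hs]
      rintro _ ⟨h, rfl⟩
      calc h s * r = h (r • s) := by rw [map_smul, smul_eq_mul, mul_comm]
        _ = 0 := by rw [← LinearMap.toSpanSingleton_apply, hr, map_zero]
    have hS := shortExact_mkQ_range hf
    refine ⟨_, isTestModule_one hS (by simpa using hs), fun a ha ↦ ?_⟩
    have := ext_free c a (by lia)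
    have := hn (a + 1) ha
    exact subsingleton_ext_X₃ hS _ a
  | succ j ih =>
    obtain ⟨Z, hZ, ext_Z⟩ := ih (by lia)
    have := hZ.finite
    have := ext_Z 0 (by lia)
    obtain ⟨c, f, hf⟩ := exists_surjective_lcomp (R := R) Z
    have hS := shortExact_mkQ_range
      (injective_of_surjective_lcomp hf hZ.le_radical eq_zero_of_forall_smul_eq_zero)
    refine ⟨_, hZ.X₃ hS hf, fun a ha ↦ ?_⟩
    have := ext_free c a (by lia)
    have := ext_Z (a + 1) (by lia)
    exact subsingleton_ext_X₃ hS _ a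

end ExistsTestModule

section DualExtMap

variable {R}

/-- The map `Ext^i(N, R) → Ext^i(M, R)` induced by `f : M ⟶ N`. -/
noncomputable def DualExt.map {M N : ModuleCat.{u} R} (f : M ⟶ N) (i : ℕ) :
    DualExt N i →ₗ[R] DualExt M i :=
  (Ext.mk₀ f).precompOfLinear R (.of R R) (zero_add i)

lemma DualExt.map_apply {M N : ModuleCat.{u} R} (f : M ⟶ N) {i : ℕ} (e : DualExt N i) :
    DualExt.map f i e = (Ext.mk₀ f).comp e (zero_add i) := rfl

lemma DualExt.map_comp_apply {M N L : ModuleCat.{u} R} (f : M ⟶ N) (g : N ⟶ L) {i : ℕ}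
    (e : DualExt L i) : DualExt.map (f ≫ g) i e = DualExt.map f i (DualExt.map g i e) :=
  (Ext.mk₀_comp_mk₀_assoc f g e).symm

lemma DualExt.map_comp_apply_of_projective {M P N : ModuleCat.{u} R} [Projective P] (f : M ⟶ P)
    (g : P ⟶ N) {i : ℕ} (e : DualExt N (i + 1)) : DualExt.map (f ≫ g) (i + 1) e = 0 := by
  rw [DualExt.map_comp_apply, (DualExt.map g (i + 1) e).eq_zero_of_projective, map_zero]

lemma DualExt.map_add_apply {M N : ModuleCat.{u} R} (f g : M ⟶ N) {i : ℕ} (e : DualExt N i) :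
    DualExt.map (f + g) i e = DualExt.map f i e + DualExt.map g i e := by
  simp only [DualExt.map_apply, Ext.mk₀_add, Ext.add_comp]

lemma DualExt.map_fst_map_inl {M P : ModuleCat.{u} R} [Projective P] {i : ℕ}
    (e : DualExt (ModuleCat.of R (M × P)) (i + 1)) :
    DualExt.map (ModuleCat.ofHom (LinearMap.fst R M P)) (i + 1)
      (DualExt.map (ModuleCat.ofHom (LinearMap.inl R M P)) (i + 1) e) = e := by
  let inr : P ⟶ ModuleCat.of R (M × P) := ModuleCat.ofHom (LinearMap.inr R M P)
  let snd : ModuleCat.of R (M × P) ⟶ P := ModuleCat.ofHom (LinearMap.snd R M P)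
  have decomposition : ModuleCat.ofHom (LinearMap.fst R M P) ≫
      ModuleCat.ofHom (LinearMap.inl R M P) + snd ≫ inr = 𝟙 (ModuleCat.of R (M × P)) := by
    ext x <;> simp [snd, inr]
  rw [← DualExt.map_comp_apply, ← add_zero (DualExt.map _ _ e),
    ← DualExt.map_comp_apply_of_projective snd inr e, ← DualExt.map_add_apply, decomposition,
    DualExt.map_apply, Ext.mk₀_id_comp]

lemma surjective_map_f {S : ShortComplex (ModuleCat.{u} R)} (hS : S.ShortExact) {i : ℕ}
    (hg : Function.Injective (DualExt.map S.g (i + 1))) :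
    Function.Surjective (DualExt.map S.f i) := fun e ↦
  Ext.contravariant_sequence_exact₁ hS _ e (add_comm 1 i) <|
    (injective_iff_map_eq_zero _).1 hg _ (hS.comp_extClass_assoc e _)

end DualExtMap

section MappingFiber

lemma IsPuncturedFree.prod {R : Type u} [CommRing R] [IsLocalRing R] {M N : ModuleCat.{u} R}
    (hM : IsPuncturedFree M) (hN : IsPuncturedFree N) :
    IsPuncturedFree (ModuleCat.of R (M × N)) :=
  .X₂ (S := ModuleCat.shortComplexOfCompEqZero (LinearMap.inl R M N) (LinearMap.snd R M N)
      (LinearMap.snd_comp_inl ..))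
    (ModuleCat.shortComplex_shortExact _ Function.Exact.inl_snd LinearMap.inl_injective
      LinearMap.snd_surjective) hM hN

variable {R} {M Z P : ModuleCat.{u} R} (f : M ⟶ Z) (g : P ⟶ Z)

/-- The fiber of `f : M ⟶ Z` in the stable category: the kernel of `(f, g) : M × P ⟶ Z`, where `g`
is a surjection from a projective module. -/
abbrev mappingFiber : ModuleCat.{u} R := .of R (f.hom.coprod g.hom).ker

/-- The canonical map from the fiber of `f : M ⟶ Z` to `M`. -/
def mappingFiberFst : mappingFiber f g ⟶ M :=
  ModuleCat.ofHom (f.hom.coprod g.hom).ker.subtype ≫ ModuleCat.ofHom (LinearMap.fst R M P)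

lemma mappingFiberFst_comp : mappingFiberFst f g ≫ f =
    ModuleCat.ofHom (-(LinearMap.snd R M P ∘ₗ (f.hom.coprod g.hom).ker.subtype)) ≫ g := by
  ext ⟨x, hx⟩
  change f.hom x.1 = g.hom (-x.2)
  rw [map_neg]
  exact eq_neg_of_add_eq_zero_left hx

lemma map_mappingFiberFst_map [Projective P] {i : ℕ} (e : DualExt Z (i + 1)) :
    DualExt.map (mappingFiberFst f g) (i + 1) (DualExt.map f (i + 1) e) = 0 := by
  rw [← DualExt.map_comp_apply, mappingFiberFst_comp, DualExt.map_comp_apply_of_projective]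

/-- The inclusion of the kernel of `g` into the fiber of `f` as the kernel of
`mappingFiberFst f g`. -/
def mappingFiberInr : g.hom.ker →ₗ[R] (f.hom.coprod g.hom).ker :=
  (LinearMap.inr R M P).restrict fun p hp ↦ by simpa using hp

variable {f g} (hg : Function.Surjective g.hom)
include hg

lemma shortExact_mappingFiber : (f.hom.coprod g.hom).shortComplexKer.ShortExact :=
  LinearMap.shortExact_shortComplexKer fun z ↦ by
    obtain ⟨p, rfl⟩ := hg z
    exact ⟨(0, p), by simp⟩

lemma shortExact_mappingFiberFst :
    (ModuleCat.shortComplexOfCompEqZero (mappingFiberInr f g) (mappingFiberFst f g).hom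
      (by ext; rfl)).ShortExact := by
  refine ModuleCat.shortComplex_shortExact _ ?_ ?_ ?_
  · rintro ⟨⟨m, p⟩, h⟩
    refine ⟨?_, ?_⟩
    · rintro rfl
      exact ⟨⟨p, by simpa using h⟩, rfl⟩
    · rintro ⟨p, hp⟩
      exact congrArg (fun x ↦ x.1.1) hp.symm
  · exact fun p q hpq ↦ Subtype.ext (congrArg (fun x ↦ x.1.2) hpq)
  · intro m
    obtain ⟨p, hp⟩ := hg (-f.hom m)
    exact ⟨⟨(m, p), by simp [hp]⟩, rfl⟩

lemma surjective_map_of_subsingleton_mappingFiber {n : ℕ}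
    [Subsingleton (DualExt (mappingFiber f g) n)] : Function.Surjective (DualExt.map f n) := by
  intro e
  let inl : M ⟶ ModuleCat.of R (M × P) := ModuleCat.ofHom (LinearMap.inl R M P)
  let fst : ModuleCat.of R (M × P) ⟶ M := ModuleCat.ofHom (LinearMap.fst R M P)
  have inl_fst : inl ≫ fst = 𝟙 M := rfl
  have inl_coprod : inl ≫ ModuleCat.ofHom (f.hom.coprod g.hom) = f := by
    ext; simp [inl]
  obtain ⟨e', he'⟩ : ∃ e', DualExt.map (ModuleCat.ofHom (f.hom.coprod g.hom)) n e' =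
      DualExt.map fst n e := Ext.contravariant_sequence_exact₂ (shortExact_mappingFiber hg) _ _
    (Subsingleton.elim (α := DualExt (mappingFiber f g) n) _ _)
  refine ⟨e', ?_⟩
  rw [← inl_coprod, DualExt.map_comp_apply, he', ← DualExt.map_comp_apply, inl_fst,
    DualExt.map_apply, Ext.mk₀_id_comp]

lemma extAnnihilator_mul_le_mappingFiber [Projective P] :
    extAnnihilator R Z * extAnnihilator R M ≤ extAnnihilator R (mappingFiber f g) := by
  have : Projective g.hom.shortComplexKer.X₂ := ‹Projective P›
  have hK := extAnnihilator_X₃_le_X₁ (R := R) (LinearMap.shortExact_shortComplexKer hg)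
  have hX := extAnnihilator_mul_le_X₂ (R := R) (shortExact_mappingFiberFst (f := f) hg)
  refine le_trans ?_ hX
  exact Ideal.mul_mono_left hK

lemma surjective_map_mappingFiberFst [Projective P] {i : ℕ}
    (hf : Function.Injective (DualExt.map f (i + 2))) :
    Function.Surjective (DualExt.map (mappingFiberFst f g) (i + 1)) := by
  let inl : M ⟶ ModuleCat.of R (M × P) := ModuleCat.ofHom (LinearMap.inl R M P)
  have inl_comp : inl ≫ ModuleCat.ofHom (f.hom.coprod g.hom) = f := by
    ext; simp [inl]
  have injective_map_coprod :
      Function.Injective (DualExt.map (ModuleCat.ofHom (f.hom.coprod g.hom)) (i + 2)) := by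
    refine .of_comp (f := DualExt.map inl (i + 2)) ?_
    convert hf using 1
    ext e
    rw [Function.comp_apply, ← DualExt.map_comp_apply, inl_comp]
  intro e
  obtain ⟨e, rfl⟩ := surjective_map_f (shortExact_mappingFiber hg) injective_map_coprod e
  refine ⟨DualExt.map inl (i + 1) e, ?_⟩
  rw [mappingFiberFst, DualExt.map_comp_apply]
  exact congrArg (DualExt.map _ (i + 1)) (DualExt.map_fst_map_inl e)

lemma IsPuncturedFree.mappingFiber [IsNoetherianRing R] [IsLocalRing R] [Module.Finite R P]
    [Projective P] (hM : IsPuncturedFree M) (hZ : IsPuncturedFree Z) :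
    IsPuncturedFree (mappingFiber f g) :=
  .X₁ (shortExact_mappingFiber hg) (hM.prod (isPuncturedFree_of_projective P)) hZ

end MappingFiber

section Reduction

open IsLocalRing

variable {R} [IsLocalRing R]

lemma IsTestModule.not_hasProjectiveDimensionLE {j : ℕ} {Z : ModuleCat.{u} R}
    (h : IsTestModule (j + 1) Z) : ¬ HasProjectiveDimensionLE Z j := fun _ ↦
  have := h.isSimpleModule_dualExt.nontrivial
  not_subsingleton (DualExt Z (j + 1)) <| subsingleton_of_forall_eq 0 fun e ↦
    e.eq_zero_of_hasProjectiveDimensionLT (j + 1) le_rfl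

variable [IsNoetherianRing R]

lemma exists_dualExt_map_ne_zero {M Y : ModuleCat.{u} R} [Module.Finite R Y] {n : ℕ}
    (hpd : HasProjectiveDimensionLE Y (n + 1)) (hY : ¬ HasProjectiveDimensionLE Y n)
    (hM : IsPuncturedFree M) [Nontrivial (DualExt M (n + 1))]
    (h : ∀ i < n, Subsingleton (DualExt M (i + 1))) :
    ∃ f : M ⟶ Y, DualExt.map f (n + 1) ≠ 0 := by
  have ann_le : extAnnihilator R M ≤ Module.annihilator R (DualExt M (n + 1)) := fun r hr ↦
    Module.mem_annihilator.2 (mem_extAnnihilator_iff.1 hr _ _)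
  obtain ⟨ξ, hξ, hmξ⟩ := exists_ne_zero_forall_smul_eq_zero_of_le_radical
    (IsNoetherian.noetherian (maximalIdeal R)) (hM.le_radical.trans (Ideal.radical_mono ann_le))
  obtain ⟨τ, hτ⟩ := exists_isSocleUniversal hpd hY
  obtain ⟨f, hf⟩ := hτ (zero_add _) ξ hmξ fun
    | 0, h0, _ => absurd h0 (lt_irrefl 0)
    | i + 1, _, hi => h i (by lia)
  obtain ⟨f, rfl⟩ := (Ext.mk₀_bijective _ _).2 f
  exact ⟨f, fun h0 ↦ hξ (hf.symm.trans (LinearMap.congr_fun h0 τ))⟩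

lemma IsTestModule.hasProjectiveDimensionLE {j : ℕ} {Z : ModuleCat.{u} R}
    (h : IsTestModule (j + 1) Z) : HasProjectiveDimensionLE Z (j + 1) :=
  have := h.finite
  hasProjectiveDimensionLE_of_forall_subsingleton_dualExt Z h.exists_hasProjectiveDimensionLE fun
    | i + 1, hi => h.subsingleton_dualExt i (by lia)

lemma IsTestModule.exists_forall_injective_map {j : ℕ} {M Z : ModuleCat.{u} R}
    (hZ : IsTestModule (j + 1) Z) (hM : IsPuncturedFree M) [Nontrivial (DualExt M (j + 1))]
    (h : ∀ i < j, Subsingleton (DualExt M (i + 1))) :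
    ∃ f : M ⟶ Z, ∀ i, Function.Injective (DualExt.map f (i + 1)) := by
  have := hZ.finite
  have := hZ.isSimpleModule_dualExt
  obtain ⟨f, hf⟩ := exists_dualExt_map_ne_zero hZ.hasProjectiveDimensionLE
    hZ.not_hasProjectiveDimensionLE hM h
  refine ⟨f, fun i ↦ ?_⟩
  obtain rfl | hij := eq_or_ne i j
  · exact (LinearMap.injective_or_eq_zero _).resolve_right hf
  · have := hZ.subsingleton_dualExt i (by lia)
    exact Function.injective_of_subsingleton _

end Reduction

section ShortExact

variable {R}

lemma isSES_of_shortExact {S : ShortComplex (ModuleCat.{u} R)} (hS : S.ShortExact) :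
    IsSES S.f.hom S.g.hom :=
  ⟨hS.moduleCat_injective_f, hS.moduleCat_surjective_g, hS.exact.moduleCat_range_eq_ker⟩

variable {𝒳 : Set (ModuleCat.{u} R)} (hX : IsResolving R 𝒳)
include hX

lemma IsResolving.X₁_mem [IsNoetherianRing R] {S : ShortComplex (ModuleCat.{u} R)}
    (hS : S.ShortExact) [hfin : Module.Finite R S.X₂] [hproj : Projective S.X₂] (h₃ : S.X₃ ∈ 𝒳) :
    S.X₁ ∈ 𝒳 :=
  hX.syzygy_closed _ _ _ _ _ (isSES_of_shortExact hS)
    (Module.Finite.of_injective S.f.hom hS.moduleCat_injective_f) hfin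
    ((IsProjective.iff_projective S.X₂).2 hproj) h₃

lemma IsResolving.X₂_mem {S : ShortComplex (ModuleCat.{u} R)} (hS : S.ShortExact)
    (h₁ : S.X₁ ∈ 𝒳) (h₃ : S.X₃ ∈ 𝒳) : S.X₂ ∈ 𝒳 :=
  hX.ext_closed _ _ _ _ _ (isSES_of_shortExact hS) h₁ h₃

lemma IsResolving.mappingFiber_mem [IsNoetherianRing R] {M Z P : ModuleCat.{u} R}
    [Module.Finite R P] [Projective P] {f : M ⟶ Z} {g : P ⟶ Z} (hg : Function.Surjective g.hom)
    (hM : M ∈ 𝒳) (hZ : Z ∈ 𝒳) :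
    mappingFiber f g ∈ 𝒳 := by
  have hK : ModuleCat.of R g.hom.ker ∈ 𝒳 :=
    hX.X₁_mem (LinearMap.shortExact_shortComplexKer hg) hZ
  exact hX.X₂_mem (shortExact_mappingFiberFst hg) hK hM

lemma IsResolving.mem_of_mappingFiber_mem {M Z P : ModuleCat.{u} R} {f : M ⟶ Z} {g : P ⟶ Z}
    (hg : Function.Surjective g.hom) (hfiber : mappingFiber f g ∈ 𝒳) (hZ : Z ∈ 𝒳) : M ∈ 𝒳 :=
  hX.summand_closed M P (hX.X₂_mem (shortExact_mappingFiber hg) hfiber hZ)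

end ShortExact

section Filtration

variable {R}

lemma acc_of_isNoetherian {ι : Type*} (E : ι → Type*) [∀ i, AddCommGroup (E i)]
    [∀ i, Module R (E i)] (i : ι) [IsNoetherian R (E i)] :
    Acc (fun k l ↦ ∃ π : E l →ₗ[R] E k, Function.Surjective π ∧ ¬ Function.Injective π) i := by
  suffices ∀ (K : Submodule R (E i)) (l : ι) (ρ : E i →ₗ[R] E l), Function.Surjective ρ →
      ρ.ker = K →
      Acc (fun k l ↦ ∃ π : E l →ₗ[R] E k, Function.Surjective π ∧ ¬ Function.Injective π) l from
    this _ i LinearMap.id Function.surjective_id rfl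
  intro K
  induction K using WellFoundedGT.induction with | _ K ih => ?_
  rintro l ρ hρ rfl
  refine ⟨_, fun k ⟨π, hπ, hinj⟩ ↦ ih _ ?_ k (π ∘ₗ ρ) (hπ.comp hρ) rfl⟩
  refine (LinearMap.ker_le_ker_comp ρ π).lt_of_not_ge fun hle ↦ hinj ?_
  rw [injective_iff_map_eq_zero]
  intro y hy
  obtain ⟨x, rfl⟩ := hρ y
  exact hle hy

variable [IsLocalRing R] [IsNoetherianRing R] {𝒳 : Set (ModuleCat.{u} R)} (hX : IsResolving R 𝒳)
include hX

lemma IsResolving.mem_of_forall_subsingleton_dualExt {M : ModuleCat.{u} R} (hM : IsPuncturedFree M)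
    (h : ∀ i, Subsingleton (DualExt M (i + 1))) : M ∈ 𝒳 := by
  have := hM.finite
  refine hX.proj_mem M hM.finite ((IsProjective.iff_projective M).2 ?_)
  exact (projective_iff_hasProjectiveDimensionLE_zero M).2 <|
    hasProjectiveDimensionLE_of_forall_subsingleton_dualExt M hM.exists_hasProjectiveDimensionLE
      fun | i + 1, _ => h i

theorem IsResolving.mem_of_isPuncturedFree {n j : ℕ} (hj : j ≤ n)
    (hZ : ∀ i < n, ∃ Z ∈ 𝒳, IsTestModule (i + 1) Z) {M : ModuleCat.{u} R} (hM : IsPuncturedFree M)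
    (h_lt : ∀ i < j, Subsingleton (DualExt M (i + 1)))
    (h_ge : ∀ i, n ≤ i → Subsingleton (DualExt M (i + 1))) : M ∈ 𝒳 := by
  induction hj using Nat.decreasingInduction generalizing M with
  | self =>
    exact hX.mem_of_forall_subsingleton_dualExt hM fun i ↦ (lt_or_ge i n).elim (h_lt i) (h_ge i)
  | of_succ j hj ih =>
    obtain ⟨Z, hZX, hZ⟩ := hZ j hj
    have := hZ.finite
    have := hM.finite
    induction acc_of_isNoetherian (R := R) (fun M : ModuleCat.{u} R ↦ DualExt M (j + 1)) M with
    | intro M _ ih_quotient =>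
    obtain _ | _ := subsingleton_or_nontrivial (DualExt M (j + 1))
    · exact ih hM (fun i hi ↦ (Nat.lt_succ_iff_lt_or_eq.1 hi).elim (h_lt i) (· ▸ ‹_›)) h_ge
    obtain ⟨f, hf⟩ := hZ.exists_forall_injective_map hM h_lt
    obtain ⟨c, g, hg⟩ := Module.Finite.exists_fin' R Z
    let q := mappingFiberFst f (ModuleCat.ofHom g : ModuleCat.of R (Fin c → R) ⟶ Z)
    have surjective_map_q (i : ℕ) : Function.Surjective (DualExt.map q (i + 1)) :=
      surjective_map_mappingFiberFst hg (hf (i + 1))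
    have not_injective_map_q : ¬ Function.Injective (DualExt.map q (j + 1)) := fun hq ↦ by
      have := hZ.isSimpleModule_dualExt.nontrivial
      obtain ⟨η, hη⟩ := exists_ne (0 : DualExt Z (j + 1))
      exact hη (hf j (hq (by simp [q, map_mappingFiberFst_map])))
    have hfiber : IsPuncturedFree (mappingFiber f (ModuleCat.ofHom g)) := hM.mappingFiber hg hZ.1
    have := hfiber.finite
    refine hX.mem_of_mappingFiber_mem hg (ih_quotient _
      ⟨DualExt.map q (j + 1), surjective_map_q j, not_injective_map_q⟩ hfiber (fun i hi ↦ ?_)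
      (fun i hi ↦ ?_) this) hZX
    · have := h_lt i hi
      exact (surjective_map_q i).subsingleton
    · have := h_ge i hi
      exact (surjective_map_q i).subsingleton

end Filtration

section TestModules

variable {R} [IsLocalRing R] [IsNoetherianRing R]
  {𝒳 : Set (ModuleCat.{u} R)} (hX : IsResolving R 𝒳)
include hX

lemma IsResolving.exists_isTestModule_mem_of_lt {j : ℕ} {Y : ModuleCat.{u} R} (hYX : Y ∈ 𝒳)
    (hY : IsPuncturedFree Y) (hpd : HasProjectiveDimensionLE Y (j + 1))
    (hpd' : ¬ HasProjectiveDimensionLE Y j) (hlt : ∀ i < j, ∃ Z ∈ 𝒳, IsTestModule (i + 1) Z) :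
    ∃ Z ∈ 𝒳, IsTestModule (j + 1) Z := by
  have := hY.finite
  obtain ⟨Z, hZ, -⟩ := exists_isTestModule (n := j + 1)
    (fun t ht ↦ subsingleton_dualExt_residueMod hpd hpd' t (by lia)) (Nat.lt_succ_self j)
  have := hZ.isSimpleModule_dualExt
  have := hZ.isSimpleModule_dualExt.nontrivial
  obtain ⟨f, hf⟩ := exists_dualExt_map_ne_zero hpd hpd' hZ.toIsPuncturedFree
    fun i hi ↦ hZ.subsingleton_dualExt i (by lia)
  have surjective_map_f : Function.Surjective (DualExt.map f (j + 1)) :=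
    (LinearMap.surjective_or_eq_zero _).resolve_right hf
  obtain ⟨c, g, hg⟩ := Module.Finite.exists_fin' R Y
  let q := mappingFiberFst f (ModuleCat.ofHom g : ModuleCat.of R (Fin c → R) ⟶ Y)
  have hfiber : IsPuncturedFree (mappingFiber f (ModuleCat.ofHom g)) :=
    hZ.toIsPuncturedFree.mappingFiber hg hY
  have surjective_map_q {i : ℕ} (hi : j ≤ i) : Function.Surjective (DualExt.map q (i + 1)) := by
    have : Subsingleton (DualExt Y (i + 2)) := subsingleton_of_forall_eq 0 fun e ↦
      e.eq_zero_of_hasProjectiveDimensionLT (j + 2) (by lia)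
    exact surjective_map_mappingFiberFst hg (Function.injective_of_subsingleton _)
  have map_q_eq_zero : ∀ e, DualExt.map q (j + 1) e = 0 := fun e ↦ by
    obtain ⟨e, rfl⟩ := surjective_map_f e
    exact map_mappingFiberFst_map _ _ e
  refine ⟨Z, hX.mem_of_mappingFiber_mem hg (hX.mem_of_isPuncturedFree (Nat.zero_le j) hlt
    hfiber (by lia) fun i hi ↦ ?_) hYX, hZ⟩
  obtain rfl | hij := eq_or_ne i j
  · refine subsingleton_of_forall_eq 0 fun e ↦ ?_
    obtain ⟨e, rfl⟩ := surjective_map_q le_rfl e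
    exact map_q_eq_zero e
  · have := hZ.subsingleton_dualExt i (by lia)
    exact (surjective_map_q hi).subsingleton

lemma IsResolving.exists_isTestModule_mem {n : ℕ} {Y : ModuleCat.{u} R} (hYX : Y ∈ 𝒳)
    (hY : IsPuncturedFree Y) (hpd : HasProjectiveDimensionLE Y (n + 1))
    (hpd' : ¬ HasProjectiveDimensionLE Y n) : ∀ i < n + 1, ∃ Z ∈ 𝒳, IsTestModule (i + 1) Z := by
  induction n generalizing Y with
  | zero =>
    exact Nat.forall_lt_succ_right.2
      ⟨by lia, hX.exists_isTestModule_mem_of_lt hYX hY hpd hpd' (by lia)⟩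
  | succ n ih =>
    have := hY.finite
    obtain ⟨c, g, hg⟩ := Module.Finite.exists_fin' R Y
    have hS := LinearMap.shortExact_shortComplexKer hg
    have hlt := ih (Y := .of R g.ker) (hX.X₁_mem hS hYX)
      (.X₁ hS (isPuncturedFree_of_projective (.of R (Fin c → R))) hY)
      ((hS.hasProjectiveDimensionLT_X₃_iff (n + 1) inferInstance).1 hpd)
      (mt (hS.hasProjectiveDimensionLT_X₃_iff n inferInstance).2 hpd')
    exact Nat.forall_lt_succ_right.2
      ⟨hlt, hX.exists_isTestModule_mem_of_lt hYX hY hpd hpd' hlt⟩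

end TestModules

section ScalarFiber

open IsLocalRing

variable {R}

lemma mem_extAnnihilator_mappingFiber_smul_id {N P : ModuleCat.{u} R} [Projective P]
    (g : P ⟶ N) (x : R) : x ∈ extAnnihilator R (mappingFiber (x • 𝟙 N) g) := by
  refine mem_extAnnihilator_of_comp_eq_smul_id
    (f := ModuleCat.ofHom (LinearMap.snd R N P ∘ₗ Submodule.subtype _))
    (g := ModuleCat.ofHom <| (LinearMap.prod (-g.hom) (x • LinearMap.id)).codRestrict
      ((x • 𝟙 N : N ⟶ N).hom.coprod g.hom).ker fun p ↦ by simp) ?_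
  ext ⟨⟨n, p⟩, h⟩
  · exact (eq_neg_of_add_eq_zero_left (a := x • n) h).symm
  · rfl

variable [IsNoetherianRing R] [IsLocalRing R]

lemma not_hasProjectiveDimensionLE_mappingFiber_smul_id {N P : ModuleCat.{u} R}
    [Module.Finite R N] {g : P ⟶ N} (hg : Function.Surjective g.hom) {x : R}
    (hx : x ∈ maximalIdeal R) {n : ℕ} (hpd : HasProjectiveDimensionLE N (n + 1))
    (hpd' : ¬ HasProjectiveDimensionLE N n) :
    ¬ HasProjectiveDimensionLE (mappingFiber (x • 𝟙 N) g) n := by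
  intro h
  refine hpd' (hasProjectiveDimensionLE_of_subsingleton_dualExt_succ N ?_)
  have : Subsingleton (DualExt (mappingFiber (x • 𝟙 N) g) (n + 1)) :=
    subsingleton_of_forall_eq 0 fun e ↦ e.eq_zero_of_hasProjectiveDimensionLT (n + 1) le_rfl
  rw [← Submodule.subsingleton_iff R, ← subsingleton_iff_bot_eq_top, eq_comm]
  refine Submodule.eq_bot_of_le_smul_of_le_jacobson_bot (maximalIdeal R) _ Module.Finite.fg_top ?_
    (maximalIdeal_le_jacobson _)
  intro e _
  obtain ⟨e, rfl⟩ := surjective_map_of_subsingleton_mappingFiber (f := x • 𝟙 N) hg e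
  rw [show DualExt.map (x • 𝟙 N) (n + 1) e = x • e from mk₀_smul_id_comp x e]
  exact Submodule.smul_mem_smul hx Submodule.mem_top

variable {𝒳 : Set (ModuleCat.{u} R)} (hX : IsResolving R 𝒳)
include hX

lemma IsResolving.exists_mem_extAnnihilator_of_mem {n : ℕ} {N : ModuleCat.{u} R} (hN : N ∈ 𝒳)
    (hpd : HasProjectiveDimensionLE N (n + 1)) (hpd' : ¬ HasProjectiveDimensionLE N n) {x : R}
    (hx : x ∈ maximalIdeal R) : ∃ N' ∈ 𝒳, HasProjectiveDimensionLE N' (n + 1) ∧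
      ¬ HasProjectiveDimensionLE N' n ∧ x ∈ extAnnihilator R N' ∧
      (extAnnihilator R N).radical ≤ (extAnnihilator R N').radical := by
  have := hX.fg N hN
  obtain ⟨c, g₀, hg₀⟩ := Module.Finite.exists_fin' R N
  let P : ModuleCat R := .of R (Fin c → R)
  let g : P ⟶ N := ModuleCat.ofHom g₀
  have hg : Function.Surjective g.hom := hg₀
  refine ⟨mappingFiber (x • 𝟙 N) g, hX.mappingFiber_mem hg hN hN, ?_,
    not_hasProjectiveDimensionLE_mappingFiber_smul_id hg hx hpd hpd',
    mem_extAnnihilator_mappingFiber_smul_id g x, ?_⟩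
  · refine (shortExact_mappingFiberFst hg).hasProjectiveDimensionLT_X₂ (n + 2) ?_ hpd
    exact (LinearMap.shortExact_shortComplexKer hg).hasProjectiveDimensionLT_X₁ (n + 2)
      (hasProjectiveDimensionLT_of_ge P 1 _ (by lia))
      (hasProjectiveDimensionLT_of_ge N (n + 2) _ (by lia))
  · calc (extAnnihilator R N).radical
        = (extAnnihilator R N * extAnnihilator R N).radical := by rw [Ideal.radical_mul, inf_idem]
      _ ≤ _ := Ideal.radical_mono (extAnnihilator_mul_le_mappingFiber hg)

lemma IsResolving.exists_isPuncturedFree_mem {n : ℕ} {N : ModuleCat.{u} R} (hN : N ∈ 𝒳)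
    (hpd : HasProjectiveDimensionLE N (n + 1)) (hpd' : ¬ HasProjectiveDimensionLE N n) :
    ∃ Y ∈ 𝒳, IsPuncturedFree Y ∧ HasProjectiveDimensionLE Y (n + 1) ∧
      ¬ HasProjectiveDimensionLE Y n := by
  classical
  suffices ∀ s : Finset R, Ideal.span (s : Set R) ≤ maximalIdeal R → ∃ Y ∈ 𝒳,
      HasProjectiveDimensionLE Y (n + 1) ∧ ¬ HasProjectiveDimensionLE Y n ∧
      Ideal.span (s : Set R) ≤ (extAnnihilator R Y).radical by
    obtain ⟨s, hs⟩ := IsNoetherian.noetherian (maximalIdeal R)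
    obtain ⟨Y, hY, hle, hlt, hann⟩ := this s hs.le
    exact ⟨Y, hY, ⟨hX.fg Y hY, ⟨_, hle⟩, hs.ge.trans hann⟩, hle, hlt⟩
  intro s hs
  induction s using Finset.induction_on with
  | empty => exact ⟨N, hN, hpd, hpd', by simp⟩
  | insert x s _ ih =>
    rw [Finset.coe_insert, Ideal.span_insert, sup_le_iff, Ideal.span_singleton_le_iff_mem] at hs
    obtain ⟨Y, hY, hle, hlt, hann⟩ := ih hs.2
    obtain ⟨Y', hY', hle', hlt', hx, hann'⟩ := hX.exists_mem_extAnnihilator_of_mem hY hle hlt hs.1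
    refine ⟨Y', hY', hle', hlt', ?_⟩
    rw [Finset.coe_insert, Ideal.span_insert, sup_le_iff, Ideal.span_singleton_le_iff_mem]
    exact ⟨Ideal.le_radical hx, hann.trans hann'⟩

end ScalarFiber

section ProjectiveDimension

variable {R}

lemma hasProjectiveDimensionLE_of_pdLE {n : ℕ} {M : ModuleCat.{u} R} (h : pdLE R n M) :
    HasProjectiveDimensionLE M n := by
  induction n generalizing M with
  | zero => exact (projective_iff_hasProjectiveDimensionLE_zero M).1 <|
      (IsProjective.iff_projective M).1 h
  | succ n ih =>
    obtain ⟨K, P, f, g, -, hP, ⟨hf, hg, hfg⟩, hK⟩ := h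
    have hS := ModuleCat.shortComplex_shortExact
      (ModuleCat.shortComplexOfCompEqZero f g (LinearMap.range_le_ker_iff.1 hfg.le))
      (LinearMap.exact_iff.2 hfg.symm) hf hg
    have : Projective P := (IsProjective.iff_projective P).1 hP
    exact hS.hasProjectiveDimensionLT_X₃ (n + 1) (ih hK)
      (hasProjectiveDimensionLT_of_ge P 1 _ (by lia))

lemma pdLE_of_hasProjectiveDimensionLE [IsNoetherianRing R] {n : ℕ} {M : ModuleCat.{u} R}
    [Module.Finite R M] (h : HasProjectiveDimensionLE M n) : pdLE R n M := by
  induction n generalizing M with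
  | zero => exact (IsProjective.iff_projective M).2 <|
      (projective_iff_hasProjectiveDimensionLE_zero M).2 h
  | succ n ih =>
    obtain ⟨c, g, hg⟩ := Module.Finite.exists_fin' R M
    have hS := LinearMap.shortExact_shortComplexKer hg
    exact ⟨.of R g.ker, .of R (Fin c → R), g.ker.subtype, g, inferInstance, inferInstance,
      isSES_of_shortExact hS, ih ((hS.hasProjectiveDimensionLT_X₃_iff n inferInstance).1 h)⟩

lemma pdim_le_iff [IsNoetherianRing R] {n : ℕ} {M : ModuleCat.{u} R} [Module.Finite R M] :
    pdim R M ≤ ((n : ℕ∞) : WithBot ℕ∞) ↔ HasProjectiveDimensionLE M n := by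
  refine ⟨fun h ↦ ?_, fun h ↦ sInf_le (.inr ⟨n, rfl, pdLE_of_hasProjectiveDimensionLE h⟩)⟩
  have hlt : pdim R M < ((n + 1 : ℕ) : ℕ∞) := h.trans_lt (by exact_mod_cast n.lt_succ_self)
  obtain ⟨_, ⟨-, hM⟩ | ⟨m, rfl, hm⟩, hmn⟩ := sInf_lt_iff.1 hlt
  · have := Module.Free.of_subsingleton R M
    have : Projective M := (IsProjective.iff_projective M).1 .of_free
    exact hasProjectiveDimensionLT_of_ge M 1 _ (by lia)
  · have := hasProjectiveDimensionLE_of_pdLE hm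
    exact hasProjectiveDimensionLT_of_ge M (m + 1) _ (by exact_mod_cast hmn)

end ProjectiveDimension

section Membership

variable {R} [IsLocalRing R] [IsNoetherianRing R]

theorem IsResolving.mem_of_forall_hasProjectiveDimensionLE {𝒳 : Set (ModuleCat.{u} R)}
    (hX : IsResolving R 𝒳) {M N : ModuleCat.{u} R} (hM : IsPuncturedFree M) (hN : N ∈ 𝒳)
    (hpd : ∃ n, HasProjectiveDimensionLE N n)
    (h : ∀ n, HasProjectiveDimensionLE N n → HasProjectiveDimensionLE M n) : M ∈ 𝒳 := by
  classical
  obtain ⟨n, hn, hmin⟩ : ∃ n, HasProjectiveDimensionLE N n ∧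
      ∀ k < n, ¬ HasProjectiveDimensionLE N k :=
    ⟨Nat.find hpd, Nat.find_spec hpd, fun _ ↦ Nat.find_min hpd⟩
  have := h n hn
  suffices ∀ i < n, ∃ Z ∈ 𝒳, IsTestModule (i + 1) Z from
    hX.mem_of_isPuncturedFree n.zero_le this hM (by lia) fun i hi ↦
      subsingleton_of_forall_eq 0 fun e ↦ e.eq_zero_of_hasProjectiveDimensionLT (n + 1) (by lia)
  cases n with
  | zero => lia
  | succ n =>
    obtain ⟨Y, hYX, hY, hle, hlt⟩ := hX.exists_isPuncturedFree_mem hN hn (hmin n n.lt_succ_self)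
    exact hX.exists_isTestModule_mem hYX hY hle hlt

end Membership

/-- Proposition: over a noetherian local ring, if `M ∈ PD_0(R)`, `N` has finite
projective dimension and `pd M ≤ pd N`, then `M ∈ res N`. -/
theorem mem_resClosure_of_pd_le [IsNoetherianRing R] [IsLocalRing R]
    (M N : ModuleCat.{u} R) (hMfg : Module.Finite R M) (hNfg : Module.Finite R N)
    (hMfree : ∀ p : PrimeSpectrum R, p.asIdeal ≠ IsLocalRing.maximalIdeal R →
      Module.Free (Localization.AtPrime p.asIdeal) (LocalizedModule p.asIdeal.primeCompl M))
    (hMpd : ∃ n : ℕ, pdLE R n M) (hNpd : ∃ n : ℕ, pdLE R n N)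
    (hle : pdim R M ≤ pdim R N) :
    M ∈ resClosure R {N} := by
  rintro 𝒳 ⟨hX, hN⟩
  have hM : IsPuncturedFree M := isPuncturedFree_of_forall_projective_localizedModule
    (hMpd.imp fun _ ↦ hasProjectiveDimensionLE_of_pdLE) fun p hp ↦
      have := hMfree p hp
      .of_free
  exact hX.mem_of_forall_hasProjectiveDimensionLE hM (hN rfl)
    (hNpd.imp fun _ ↦ hasProjectiveDimensionLE_of_pdLE) fun n hn ↦
    pdim_le_iff.1 (hle.trans (pdim_le_iff.2 hn))

end ResolvPaper
end
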